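/- Fix an integer d ≥ 3 and a real p with 1/(d-1) < p < 1, and let q ∈ [0,1) satisfy q = (1-p+pq)^{d-1}. Set θ₁ = 1 − q(1−p) − p q² and η₁ = (1/2) p d (1 − q²). Then for every ε > 0 and b > 0 there exist c, C, R > 0 such that: if 𝒢 is a regular (b,d)-expander on n vertices with girth at least R, then with probability at least 1 − C·exp(−c n), the random graph G ∼ 𝒢_p satisfies | |V(C₁(G))|/n − θ₁ | < ε and | |E(C₁(G))|/n − η₁ | < ε, where C₁(G) is a largest connected component of G. -/

import Mathlib

open scoped Classical symmDiff

noncomputable section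

namespace Percolation

variable {V : Type} [Fintype V] [DecidableEq V]

/-- The edge set of `G` as a finset. -/
noncomputable def edgeFinset' (G : SimpleGraph V) : Finset (Sym2 V) :=
  Finset.univ.filter (· ∈ G.edgeSet)

/-- Probability that bond percolation on `G` with parameter `p` produces a spanning
subgraph satisfying `P`. -/
noncomputable def percProb (G : SimpleGraph V) (p : ℝ) (P : SimpleGraph V → Prop) : ℝ :=
  ∑ s ∈ (edgeFinset' G).powerset,
    (p ^ s.card * (1 - p) ^ ((edgeFinset' G).card - s.card)) *
      (if P (SimpleGraph.fromEdgeSet (↑s)) then 1 else 0)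

/-- Joint probability for two independent bond percolations on `G`. -/
noncomputable def percProb2 (G : SimpleGraph V) (p₁ p₂ : ℝ)
    (P : SimpleGraph V → SimpleGraph V → Prop) : ℝ :=
  ∑ s ∈ (edgeFinset' G).powerset, ∑ t ∈ (edgeFinset' G).powerset,
    (p₁ ^ s.card * (1 - p₁) ^ ((edgeFinset' G).card - s.card)) *
    (p₂ ^ t.card * (1 - p₂) ^ ((edgeFinset' G).card - t.card)) *
      (if P (SimpleGraph.fromEdgeSet (↑s)) (SimpleGraph.fromEdgeSet (↑t)) then 1 else 0)

/-- Number of edges of `G` joining `S` to its complement. -/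
noncomputable def cutCard (G : SimpleGraph V) (S : Finset V) : ℕ :=
  ((edgeFinset' G).filter (fun e => ∃ x ∈ S, ∃ y, y ∉ S ∧ e = s(x, y))).card

/-- `G` is a `(b,d)`-expander: max degree at most `d`, and every vertex set of size at most
`n/2` has at least `b|S|` edges to its complement. -/
def IsExpander (G : SimpleGraph V) (b : ℝ) (d : ℕ) : Prop :=
  (∀ v, (G.neighborSet v).ncard ≤ d) ∧
  ∀ S : Finset V, (S.card : ℝ) ≤ Fintype.card V / 2 → b * S.card ≤ cutCard G S

/-- `G` is a regular `(b,d)`-expander. -/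
def IsRegularExpander (G : SimpleGraph V) (b : ℝ) (d : ℕ) : Prop :=
  IsExpander G b d ∧ ∀ v, (G.neighborSet v).ncard = d

/-- The vertices of the connected component `c` of `G`. -/
noncomputable def compVerts (G : SimpleGraph V) (c : G.ConnectedComponent) : Finset V :=
  Finset.univ.filter (fun v => G.connectedComponentMk v = c)

/-- The edges of the connected component `c` of `G`. -/
noncomputable def compEdges (G : SimpleGraph V) (c : G.ConnectedComponent) : Finset (Sym2 V) :=
  (edgeFinset' G).filter (fun e => ∀ v ∈ e, G.connectedComponentMk v = c)

/-- `c` is a largest connected component of `G`. -/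
def IsLargestComp (G : SimpleGraph V) (c : G.ConnectedComponent) : Prop :=
  ∀ c' : G.ConnectedComponent, (compVerts G c').card ≤ (compVerts G c).card

/-- The 2-core of the connected component `c` of `G` : the maximal subgraph of `G`
supported inside `c` all of whose vertices have degree at least 2. -/
noncomputable def twoCoreComp (G : SimpleGraph V) (c : G.ConnectedComponent) : SimpleGraph V :=
  sSup {H : SimpleGraph V | H ≤ G ∧ (∀ v ∈ H.support, G.connectedComponentMk v = c) ∧
    ∀ v ∈ H.support, 2 ≤ (H.neighborSet v).ncard}

/-- The event `A^R_{x,y}(H)`: the connected component of `y` in `H` with the edge `xy`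
removed (if present) has at least `R` vertices. -/
def eventA (H : SimpleGraph V) (R : ℕ) (x y : V) : Prop :=
  R ≤ (compVerts (H.deleteEdges {s(x, y)})
        ((H.deleteEdges {s(x, y)}).connectedComponentMk y)).card

/-- `E₁(H)`: edges `xy` of `H` such that `A^R_{x,y}` or `A^R_{y,x}` holds. -/
noncomputable def E1set (H : SimpleGraph V) (R : ℕ) : Finset (Sym2 V) :=
  (edgeFinset' H).filter (fun e => ∃ x y, e = s(x, y) ∧ (eventA H R x y ∨ eventA H R y x))

/-- `V₁(H)`: vertices `x` such that for some `y`, `xy ∈ E(H)` and `A^R_{x,y}` holds. -/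
noncomputable def V1set (H : SimpleGraph V) (R : ℕ) : Finset V :=
  Finset.univ.filter (fun x => ∃ y, H.Adj x y ∧ eventA H R x y)

/-- `E₂(H)`: edges `xy` of `H` such that both `A^R_{x,y}` and `A^R_{y,x}` hold. -/
noncomputable def E2set (H : SimpleGraph V) (R : ℕ) : Finset (Sym2 V) :=
  (edgeFinset' H).filter (fun e => ∃ x y, e = s(x, y) ∧ eventA H R x y ∧ eventA H R y x)

/-- `V₂(H)`: vertices incident to an edge of `E₂(H)`. -/
noncomputable def V2set (H : SimpleGraph V) (R : ℕ) : Finset V :=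
  Finset.univ.filter (fun x => ∃ e ∈ E2set H R, x ∈ e)

/-- `V̄₁(H)`: vertices `y` such that `A^R_{x,y}(H)` holds for some `x`. -/
noncomputable def Vbar1 (H : SimpleGraph V) (R : ℕ) : Finset V :=
  Finset.univ.filter (fun y => ∃ x, eventA H R x y)

/-- `S` is `k`-thick in `H`: a union of pairwise disjoint subsets, each of size at least
`k`, each inducing a connected subgraph of `H`. -/
def IsThick (H : SimpleGraph V) (k : ℕ) (S : Finset V) : Prop :=
  ∃ P : Finset (Finset V),
    (∀ T ∈ P, k ≤ T.card ∧ (H.induce (↑T : Set V)).Connected) ∧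
    (↑P : Set (Finset V)).PairwiseDisjoint id ∧ S = P.biUnion id

/-- `S` is a separator of `K`. -/
def IsSeparator {W : Type} [Fintype W] (K : SimpleGraph W) (S : Finset W) : Prop :=
  ∃ A B : Finset W, Disjoint A B ∧ Disjoint A S ∧ Disjoint B S ∧
    (∀ w, w ∈ A ∨ w ∈ B ∨ w ∈ S) ∧
    (∀ a ∈ A, ∀ b ∈ B, ¬ K.Adj a b) ∧
    3 * A.card ≤ 2 * Fintype.card W ∧ 3 * B.card ≤ 2 * Fintype.card W

section ProductMeasure

variable {α : Type*}

/-- Expectation of `f` over a random subset of `E` containing each element independently with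
probability `p`. -/
noncomputable def pex (p : ℝ) (E : Finset α) (f : Finset α → ℝ) : ℝ :=
  ∑ s ∈ E.powerset, (p ^ s.card * (1 - p) ^ (E.card - s.card)) * f s

lemma pex_empty (p : ℝ) (f : Finset α → ℝ) : pex p ∅ f = f ∅ := by
  simp [pex]

lemma pex_congr (p : ℝ) {E : Finset α} {f g : Finset α → ℝ} (h : ∀ s ⊆ E, f s = g s) :
    pex p E f = pex p E g :=
  Finset.sum_congr rfl fun s hs => by rw [h s (Finset.mem_powerset.1 hs)]

lemma pex_mono {p : ℝ} (h0 : 0 ≤ p) (h1 : p ≤ 1) {E : Finset α} {f g : Finset α → ℝ}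
    (h : ∀ s ⊆ E, f s ≤ g s) : pex p E f ≤ pex p E g := by
  have : 0 ≤ 1 - p := by linarith
  exact Finset.sum_le_sum fun s hs =>
    mul_le_mul_of_nonneg_left (h s (Finset.mem_powerset.1 hs)) (by positivity)

lemma pex_add (p : ℝ) (E : Finset α) (f g : Finset α → ℝ) :
    pex p E (fun s => f s + g s) = pex p E f + pex p E g := by
  simp [pex, mul_add, Finset.sum_add_distrib]

lemma pex_const_mul (p : ℝ) (E : Finset α) (c : ℝ) (f : Finset α → ℝ) :
    pex p E (fun s => c * f s) = c * pex p E f := by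
  unfold pex
  rw [Finset.mul_sum]
  exact Finset.sum_congr rfl fun s _ => by ring

lemma pex_sub (p : ℝ) (E : Finset α) (f g : Finset α → ℝ) :
    pex p E (fun s => f s - g s) = pex p E f - pex p E g := by
  simp [pex, mul_sub, Finset.sum_sub_distrib]

lemma pex_neg (p : ℝ) (E : Finset α) (f : Finset α → ℝ) :
    pex p E (fun s => -f s) = -pex p E f := by
  simp [pex]

lemma pex_sum {ι : Type*} (p : ℝ) (E : Finset α) (I : Finset ι) (f : ι → Finset α → ℝ) :
    pex p E (fun s => ∑ i ∈ I, f i s) = ∑ i ∈ I, pex p E (f i) := by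
  unfold pex
  rw [Finset.sum_comm]
  exact Finset.sum_congr rfl fun s _ => by rw [Finset.mul_sum]

/-- The function `f` of a finite set only depends on its trace on `T`. -/
def DepOn {β : Type*} (T : Finset α) (f : Finset α → β) : Prop :=
  ∀ s s' : Finset α, (∀ e ∈ T, e ∈ s ↔ e ∈ s') → f s = f s'

lemma DepOn.mono {β : Type*} {T T' : Finset α} {f : Finset α → β} (h : DepOn T f)
    (hT : T ⊆ T') : DepOn T' f :=
  fun s s' hs => h s s' fun e he => hs e (hT he)

variable [DecidableEq α]

lemma pex_insert (p : ℝ) {a : α} {E : Finset α} (ha : a ∉ E) (f : Finset α → ℝ) :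
    pex p (insert a E) f = (1 - p) * pex p E f + p * pex p E (fun s => f (insert a s)) := by
  unfold pex
  rw [Finset.sum_powerset_insert ha, Finset.mul_sum, Finset.mul_sum]
  congr 1
  · refine Finset.sum_congr rfl fun s hs => ?_
    have hs' := Finset.card_le_card (Finset.mem_powerset.1 hs)
    rw [Finset.card_insert_of_notMem ha, Nat.succ_sub hs', pow_succ]
    ring
  · refine Finset.sum_congr rfl fun s hs => ?_
    have has : a ∉ s := fun h => ha (Finset.mem_powerset.1 hs h)
    rw [Finset.card_insert_of_notMem ha, Finset.card_insert_of_notMem has,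
      Nat.add_sub_add_right, pow_succ]
    ring

lemma pex_const (p : ℝ) (E : Finset α) (c : ℝ) : pex p E (fun _ => c) = c := by
  induction E using Finset.induction_on with
  | empty => simp [pex_empty]
  | insert a E ha ih => rw [pex_insert p ha, ih]; ring

lemma pex_union (p : ℝ) {E F : Finset α} (h : Disjoint E F) (f : Finset α → ℝ) :
    pex p (E ∪ F) f = pex p E (fun s => pex p F (fun t => f (s ∪ t))) := by
  induction E using Finset.induction_on generalizing f with
  | empty => simp [pex_empty]
  | insert a E ha ih =>
    have hd := Finset.disjoint_insert_left.1 h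
    rw [Finset.insert_union, pex_insert p (by simp [ha, hd.1]), pex_insert p ha, ih hd.2, ih hd.2]
    simp only [Finset.insert_union]

/-- Sprinkling: the union of two independent random subsets is a random subset. -/
lemma pex_sprinkle (p₁ p₂ : ℝ) (E : Finset α) (f : Finset α → ℝ) :
    pex p₁ E (fun s => pex p₂ E (fun t => f (s ∪ t))) =
      pex (1 - (1 - p₁) * (1 - p₂)) E f := by
  induction E using Finset.induction_on generalizing f with
  | empty => simp [pex_empty]
  | insert a E ha ih =>
    have e1 : ∀ s t : Finset α, s ∪ insert a t = insert a (s ∪ t) := by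
      intro s t; ext; simp
    simp only [pex_insert _ ha, e1, Finset.insert_union, Finset.insert_idem, pex_add, pex_const_mul]
    rw [ih, ih (fun s => f (insert a s))]
    ring

lemma pex_mul_of_disjoint (p : ℝ) (E : Finset α) {T₁ T₂ : Finset α} (h : Disjoint T₁ T₂)
    {f g : Finset α → ℝ} (hf : DepOn T₁ f) (hg : DepOn T₂ g) :
    pex p E (fun s => f s * g s) = pex p E f * pex p E g := by
  have hE : E = (E ∩ T₁) ∪ (E \ T₁) := by
    ext x; simp only [Finset.mem_union, Finset.mem_inter, Finset.mem_sdiff]; tauto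
  have hdis : Disjoint (E ∩ T₁) (E \ T₁) := by
    rw [Finset.disjoint_left]; simp only [Finset.mem_inter, Finset.mem_sdiff]; tauto
  have hsplit : ∀ k : Finset α → ℝ, pex p E k =
      pex p (E ∩ T₁) (fun s => pex p (E \ T₁) (fun t => k (s ∪ t))) := by
    intro k
    conv_lhs => rw [hE]
    exact pex_union p hdis k
  have hf' : ∀ s ⊆ E ∩ T₁, ∀ t ⊆ E \ T₁, f (s ∪ t) = f s := by
    intro s _ t ht
    refine hf _ _ fun e he => ?_
    have : e ∉ t := fun h' => (Finset.mem_sdiff.1 (ht h')).2 he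
    simp [this]
  have hg' : ∀ s ⊆ E ∩ T₁, ∀ t ⊆ E \ T₁, g (s ∪ t) = g t := by
    intro s hs t _
    refine hg _ _ fun e he => ?_
    have : e ∉ s := fun h' =>
      Finset.disjoint_left.1 h (Finset.mem_inter.1 (hs h')).2 he
    simp [this]
  have h1 : pex p E f = pex p (E ∩ T₁) f := by
    rw [hsplit]
    refine pex_congr p fun s hs => ?_
    rw [pex_congr p (hf' s hs), pex_const]
  have h2 : pex p E g = pex p (E \ T₁) g := by
    rw [hsplit, pex_congr p (fun s hs => pex_congr p (hg' s hs)), pex_const]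
  rw [hsplit, h1, h2, mul_comm, ← pex_const_mul]
  refine pex_congr p fun s hs => ?_
  rw [mul_comm, ← pex_const_mul]
  exact pex_congr p fun t ht => by rw [hf' s hs t ht, hg' s hs t ht]

lemma depOn_prod {ι : Type*} (I : Finset ι) (T : ι → Finset α) (f : ι → Finset α → ℝ)
    (hf : ∀ i ∈ I, DepOn (T i) (f i)) :
    DepOn (I.biUnion T) (fun s => ∏ i ∈ I, f i s) :=
  fun s s' hs => Finset.prod_congr rfl fun i hi =>
    hf i hi s s' fun e he => hs e (Finset.mem_biUnion.2 ⟨i, hi, he⟩)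

lemma pex_prod_of_disjoint {ι : Type*} (p : ℝ) (E : Finset α) (I : Finset ι)
    (T : ι → Finset α) (f : ι → Finset α → ℝ) (hf : ∀ i ∈ I, DepOn (T i) (f i))
    (hT : ∀ i ∈ I, ∀ j ∈ I, i ≠ j → Disjoint (T i) (T j)) :
    pex p E (fun s => ∏ i ∈ I, f i s) = ∏ i ∈ I, pex p E (f i) := by
  induction I using Finset.induction_on with
  | empty => simp [pex_const]
  | insert a I ha ih =>
    rw [Finset.prod_insert ha, ← ih (fun i hi => hf i (Finset.mem_insert_of_mem hi))
      (fun i hi j hj => hT i (Finset.mem_insert_of_mem hi) j (Finset.mem_insert_of_mem hj)),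
      ← pex_mul_of_disjoint p E (T₁ := T a) (T₂ := I.biUnion T) _
        (hf a (Finset.mem_insert_self a I))
        (depOn_prod I T f fun i hi => hf i (Finset.mem_insert_of_mem hi))]
    · exact pex_congr p fun s _ => by rw [Finset.prod_insert ha]
    · rw [Finset.disjoint_biUnion_right]
      intro i hi
      exact hT a (Finset.mem_insert_self a I) i (Finset.mem_insert_of_mem hi)
        (fun h => ha (h ▸ hi))

/-- The probability that all elements of `F` are retained. -/
lemma pex_subset (p : ℝ) {E F : Finset α} (hF : F ⊆ E) :
    pex p E (fun s => if F ⊆ s then 1 else 0) = p ^ F.card := by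
  have h1 : ∀ a ∈ E, pex p E (fun s => if a ∈ s then 1 else 0) = p := by
    intro a ha
    rw [← Finset.insert_erase ha, pex_insert p (Finset.notMem_erase a E)]
    simp only [Finset.mem_insert_self, if_true, pex_const]
    rw [pex_congr p (g := fun _ => 0), pex_const]
    · ring
    · intro s hs
      exact if_neg fun h => Finset.notMem_erase a E (hs h)
  have h2 : ∀ s : Finset α, (if F ⊆ s then (1 : ℝ) else 0) = ∏ a ∈ F, if a ∈ s then 1 else 0 := by
    intro s
    rw [Finset.prod_ite_zero]
    simp [Finset.subset_iff]
  simp only [h2]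
  rw [pex_prod_of_disjoint p E F (fun a => {a}) (fun a s => if a ∈ s then 1 else 0)]
  · rw [Finset.prod_congr rfl (fun a ha => h1 a (hF ha)), Finset.prod_const]
  · intro a _ s s' hs
    simp only [hs a (Finset.mem_singleton_self a)]
  · intro a _ b _ hab
    simpa using hab

lemma exp_two_point_le {p x y : ℝ} (h0 : 0 ≤ p) (h1 : p ≤ 1) {r : ℝ} (hr : r ≤ 1)
    (hx : |x| ≤ r) (hy : |y| ≤ r) (hm : (1 - p) * x + p * y = 0) :
    (1 - p) * Real.exp x + p * Real.exp y ≤ Real.exp (r ^ 2) := by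
  have key : ∀ z : ℝ, |z| ≤ r → Real.exp z ≤ 1 + z + r ^ 2 := by
    intro z hz
    have h := Real.abs_exp_sub_one_sub_id_le (hz.trans hr)
    have h' : z ^ 2 ≤ r ^ 2 := by
      rw [← sq_abs z]; gcongr
    have := (abs_le.1 h).2
    linarith
  have h2 := mul_le_mul_of_nonneg_left (key x hx) (by linarith : 0 ≤ 1 - p)
  have h3 := mul_le_mul_of_nonneg_left (key y hy) h0
  have h4 := Real.add_one_le_exp (r ^ 2)
  nlinarith

lemma pex_exp_le {p : ℝ} (h0 : 0 ≤ p) (h1 : p ≤ 1) {c t : ℝ} (ht : 0 ≤ t) (htc : t * c ≤ 1)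
    (E : Finset α) (f : Finset α → ℝ) (hf : ∀ e s, |f (insert e s) - f s| ≤ c) :
    pex p E (fun s => Real.exp (t * (f s - pex p E f))) ≤ Real.exp ((t * c) ^ 2 * E.card) := by
  induction E using Finset.induction_on generalizing f with
  | empty => simp [pex_empty]
  | insert a E ha ih =>
    have ih0 := ih f hf
    have ih1 := ih (fun s => f (insert a s)) (fun e s => by
      rw [Finset.insert_comm]; exact hf e (insert a s))
    rw [pex_insert p ha, pex_insert p ha]
    set m0 := pex p E f with hm0
    set m1 := pex p E (fun s => f (insert a s)) with hm1
    have hdiff : |m1 - m0| ≤ c := by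
      rw [abs_le, hm0, hm1, ← pex_sub]
      constructor
      · rw [← pex_const p E (-c)]
        exact pex_mono h0 h1 fun s _ => (abs_le.1 (hf a s)).1
      · rw [← pex_const p E c]
        exact pex_mono h0 h1 fun s _ => (abs_le.1 (hf a s)).2
    have e0 : ∀ s, Real.exp (t * (f s - ((1 - p) * m0 + p * m1))) =
        Real.exp (t * (p * (m0 - m1))) * Real.exp (t * (f s - m0)) := by
      intro s; rw [← Real.exp_add]; congr 1; ring
    have e1 : ∀ s, Real.exp (t * (f (insert a s) - ((1 - p) * m0 + p * m1))) =
        Real.exp (t * ((1 - p) * (m1 - m0))) * Real.exp (t * (f (insert a s) - m1)) := by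
      intro s; rw [← Real.exp_add]; congr 1; ring
    have p0 := pex_congr p (E := E) fun s _ => e0 s
    have p1 := pex_congr p (E := E) fun s _ => e1 s
    rw [pex_const_mul] at p0 p1
    rw [p0, p1]
    have hc : 0 ≤ c := (abs_nonneg _).trans hdiff
    have hx : |t * (p * (m0 - m1))| ≤ t * c := by
      rw [abs_mul, abs_of_nonneg ht, abs_mul, abs_of_nonneg h0, abs_sub_comm]
      gcongr
      nlinarith [abs_nonneg (m1 - m0)]
    have hy : |t * ((1 - p) * (m1 - m0))| ≤ t * c := by
      rw [abs_mul, abs_of_nonneg ht, abs_mul, abs_of_nonneg (by linarith : 0 ≤ 1 - p)]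
      gcongr
      nlinarith [abs_nonneg (m1 - m0)]
    have h2 := exp_two_point_le h0 h1 htc hx hy (by ring)
    have h3 : (0 : ℝ) ≤ 1 - p := by linarith
    calc _ ≤ (1 - p) * (Real.exp (t * (p * (m0 - m1))) * Real.exp ((t * c) ^ 2 * E.card)) +
          p * (Real.exp (t * ((1 - p) * (m1 - m0))) * Real.exp ((t * c) ^ 2 * E.card)) := by
          gcongr
      _ = ((1 - p) * Real.exp (t * (p * (m0 - m1))) +
          p * Real.exp (t * ((1 - p) * (m1 - m0)))) * Real.exp ((t * c) ^ 2 * E.card) := by ring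
      _ ≤ Real.exp ((t * c) ^ 2) * Real.exp ((t * c) ^ 2 * E.card) := by gcongr
      _ = _ := by
          rw [← Real.exp_add, Finset.card_insert_of_notMem ha]; congr 1; push_cast; ring

/-- The rate in the bounded differences inequality. -/
noncomputable def bdRate (c D r : ℝ) : ℝ := min (1 / c) (r / (2 * c ^ 2 * D)) * r / 2

lemma bdRate_pos {c D r : ℝ} (hc : 0 < c) (hD : 0 < D) (hr : 0 < r) : 0 < bdRate c D r := by
  unfold bdRate
  have : 0 < min (1 / c) (r / (2 * c ^ 2 * D)) := lt_min (by positivity) (by positivity)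
  positivity

/-- Bounded differences inequality. -/
lemma pex_upper_tail {p : ℝ} (h0 : 0 ≤ p) (h1 : p ≤ 1) {c D r n : ℝ} (hc : 0 < c) (hD : 0 < D)
    (hr : 0 < r) (E : Finset α) (hE : E.card ≤ D * n) (f : Finset α → ℝ)
    (hf : ∀ e s, |f (insert e s) - f s| ≤ c) :
    pex p E (fun s => if r * n ≤ f s - pex p E f then 1 else 0) ≤
      Real.exp (-bdRate c D r * n) := by
  unfold bdRate
  set t := min (1 / c) (r / (2 * c ^ 2 * D)) with ht
  have ht0 : 0 < t := lt_min (by positivity) (by positivity)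
  have htc : t * c ≤ 1 := by
    calc t * c ≤ 1 / c * c := by gcongr; exact min_le_left _ _
      _ = 1 := by field_simp
  have htr : t * (c ^ 2 * D) ≤ r / 2 := by
    calc t * (c ^ 2 * D) ≤ r / (2 * c ^ 2 * D) * (c ^ 2 * D) := by
          gcongr; exact min_le_right _ _
      _ = r / 2 := by field_simp
  have hn : 0 ≤ n := by
    have : (0 : ℝ) ≤ D * n := (Nat.cast_nonneg _).trans hE
    exact nonneg_of_mul_nonneg_right this hD
  have h2 := pex_exp_le h0 h1 ht0.le htc E f hf
  have h3 : pex p E (fun s => if r * n ≤ f s - pex p E f then 1 else 0) ≤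
      pex p E (fun s => Real.exp (-(t * (r * n))) * Real.exp (t * (f s - pex p E f))) := by
    refine pex_mono h0 h1 fun s _ => ?_
    split_ifs with h
    · rw [← Real.exp_add]
      refine Real.one_le_exp ?_
      have := mul_le_mul_of_nonneg_left h ht0.le
      linarith
    · positivity
  rw [pex_const_mul] at h3
  refine h3.trans ((mul_le_mul_of_nonneg_left h2 (Real.exp_pos _).le).trans ?_)
  rw [← Real.exp_add, Real.exp_le_exp]
  have h4 : (t * c) ^ 2 * E.card ≤ t * (r / 2) * n := by
    calc (t * c) ^ 2 * E.card ≤ (t * c) ^ 2 * (D * n) := by gcongr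
      _ = t * (t * (c ^ 2 * D)) * n := by ring
      _ ≤ t * (r / 2) * n := by gcongr
  linarith

lemma pex_lower_tail {p : ℝ} (h0 : 0 ≤ p) (h1 : p ≤ 1) {c D r n : ℝ} (hc : 0 < c) (hD : 0 < D)
    (hr : 0 < r) (E : Finset α) (hE : E.card ≤ D * n) (f : Finset α → ℝ)
    (hf : ∀ e s, |f (insert e s) - f s| ≤ c) :
    pex p E (fun s => if r * n ≤ pex p E f - f s then 1 else 0) ≤
      Real.exp (-bdRate c D r * n) := by
  have h := pex_upper_tail h0 h1 hc hD hr E hE (fun s => -f s) (fun e s => by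
    rw [neg_sub_neg, abs_sub_comm]; exact hf e s)
  rw [pex_neg] at h
  simpa only [neg_sub_neg] using h

end ProductMeasure

section Girth

variable {V : Type*}

/-- Every cycle of `H` has length at least `g`. -/
def GirthGe (H : SimpleGraph V) (g : ℕ) : Prop :=
  ∀ (v : V) (c : H.Walk v v), c.IsCycle → g ≤ c.length

lemma GirthGe.mono {H H' : SimpleGraph V} {g : ℕ} (h : GirthGe H' g) (hle : H ≤ H') :
    GirthGe H g := by
  intro v c hc
  have := h v (c.mapLe hle) (hc.mapLe hle)
  simpa using this

lemma girthGe_of_le_girth {H : SimpleGraph V} {g : ℕ} (h : (g : ℕ∞) ≤ H.girth) :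
    GirthGe H g := by
  intro v c hc
  have h' : g ≤ H.girth := by exact_mod_cast h
  exact h'.trans (SimpleGraph.girth_le_length hc)

lemma GirthGe.path_unique {H : SimpleGraph V} {g : ℕ} (hg : GirthGe H g) {u v : V}
    (w₁ w₂ : H.Walk u v) (h₁ : w₁.IsPath) (h₂ : w₂.IsPath) (hlen : w₁.length + w₂.length < g) :
    w₁ = w₂ := by
  set K : SimpleGraph V := SimpleGraph.fromEdgeSet {e | e ∈ w₁.edges ∨ e ∈ w₂.edges} with hK
  have hmem : ∀ e, e ∈ w₁.edges ∨ e ∈ w₂.edges → e ∈ K.edgeSet := by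
    intro e he
    have heH : e ∈ H.edgeSet := he.elim (fun h => w₁.edges_subset_edgeSet h)
      (fun h => w₂.edges_subset_edgeSet h)
    rw [hK, SimpleGraph.edgeSet_fromEdgeSet]
    exact ⟨he, H.not_isDiag_of_mem_edgeSet heH⟩
  have hK' : ∀ e ∈ K.edgeSet, e ∈ w₁.edges ∨ e ∈ w₂.edges := by
    intro e he
    rw [hK, SimpleGraph.edgeSet_fromEdgeSet] at he
    exact he.1
  have hac : K.IsAcyclic := by
    intro x c hc
    have hcH : ∀ e ∈ c.edges, e ∈ H.edgeSet := fun e he =>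
      (hK' e (c.edges_subset_edgeSet he)).elim
        (fun h => w₁.edges_subset_edgeSet h) (fun h => w₂.edges_subset_edgeSet h)
    have h3 := hg x (c.transfer H hcH) (hc.transfer hcH)
    rw [SimpleGraph.Walk.length_transfer] at h3
    have h4 : c.edges.toFinset ⊆ (w₁.edges ++ w₂.edges).toFinset := by
      intro e he
      rw [List.mem_toFinset] at he ⊢
      exact List.mem_append.2 (hK' e (c.edges_subset_edgeSet he))
    have h5 := (Finset.card_le_card h4).trans (List.toFinset_card_le _)
    rw [List.toFinset_card_of_nodup hc.edges_nodup, List.length_append] at h5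
    simp only [SimpleGraph.Walk.length_edges] at h5
    omega
  have h6 := (hac.subsingleton_path u v).elim
    ⟨w₁.transfer K fun e he => hmem e (Or.inl he), h₁.transfer _⟩
    ⟨w₂.transfer K fun e he => hmem e (Or.inr he), h₂.transfer _⟩
  have h7 := congrArg (fun p : K.Path u v => p.1.support) h6
  simp only [SimpleGraph.Walk.support_transfer] at h7
  exact SimpleGraph.Walk.ext_support h7

lemma GirthGe.snd_unique {H : SimpleGraph V} {g : ℕ} (hg : GirthGe H g) {x y y' a : V}
    (h : H.Adj x y) (h' : H.Adj x y') (w : H.Walk y a) (w' : H.Walk y' a)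
    (hw : (SimpleGraph.Walk.cons h w).IsPath) (hw' : (SimpleGraph.Walk.cons h' w').IsPath)
    (hlen : w.length + w'.length + 2 < g) : y = y' := by
  have := hg.path_unique _ _ hw hw' (by simp only [SimpleGraph.Walk.length_cons]; omega)
  simp only [SimpleGraph.Walk.cons.injEq] at this
  exact this.1

lemma GirthGe.cons_isPath {H : SimpleGraph V} {g : ℕ} (hg : GirthGe H g) {x y z a : V}
    (hxy : H.Adj x y) (hyz : H.Adj y z) (hzx : z ≠ x) (w : H.Walk z a)
    (hw : (SimpleGraph.Walk.cons hyz w).IsPath) (hlen : w.length + 2 < g) :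
    (SimpleGraph.Walk.cons hxy (SimpleGraph.Walk.cons hyz w)).IsPath := by
  rw [SimpleGraph.Walk.cons_isPath_iff]
  refine ⟨hw, fun hx => ?_⟩
  have hxw : x ∈ w.support := by
    rw [SimpleGraph.Walk.support_cons, List.mem_cons] at hx
    exact hx.resolve_left hxy.ne
  have hp : (SimpleGraph.Walk.cons hyz (w.takeUntil x hxw)).IsPath := by
    rw [SimpleGraph.Walk.cons_isPath_iff] at hw ⊢
    exact ⟨hw.1.takeUntil hxw, fun h => hw.2 (w.support_takeUntil_subset_support hxw h)⟩
  have hq : (SimpleGraph.Walk.cons hxy.symm (SimpleGraph.Walk.nil : H.Walk x x)).IsPath := by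
    simp [SimpleGraph.Walk.cons_isPath_iff, hxy.ne']
  have hl := w.length_takeUntil_le_length hxw
  exact hzx (hg.snd_unique hyz hxy.symm _ _ hp hq (by simp only [SimpleGraph.Walk.length_nil]; omega))

lemma exists_mem_ne_of_mem_edgeSet {G : SimpleGraph V} {e : Sym2 V} (he : e ∈ G.edgeSet) (y : V) :
    ∃ a ∈ e, a ≠ y := by
  induction e with
  | _ u v =>
    by_cases hu : u = y
    · exact ⟨v, by simp, fun hv => G.ne_of_adj he (hu.trans hv.symm)⟩
    · exact ⟨u, by simp, hu⟩

end Girth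

section Exploration

variable {V : Type} [Fintype V]

/-- The neighbours of `y` in `G`. -/
noncomputable def nbrs (G : SimpleGraph V) (y : V) : Finset V :=
  Finset.univ.filter (fun z => G.Adj y z)

lemma mem_nbrs {G : SimpleGraph V} {y z : V} : z ∈ nbrs G y ↔ G.Adj y z := by
  simp [nbrs]

lemma card_nbrs (G : SimpleGraph V) (y : V) : (nbrs G y).card = (G.neighborSet y).ncard := by
  rw [← Set.ncard_coe_finset]
  congr 1
  ext z
  simp [mem_nbrs]

variable [DecidableEq V]

/-- The edges seen by non-backtracking walks of length `k + 1` in `G` that start with `x, y`. -/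
noncomputable def branchEdges (G : SimpleGraph V) : ℕ → V → V → Finset (Sym2 V)
  | 0, x, y => {s(x, y)}
  | k + 1, x, y =>
      insert s(x, y) (((nbrs G y).erase x).biUnion fun z => branchEdges G k y z)

/-- There is a non-backtracking walk of length `k + 1` in `G` that starts with `x, y` and has all
its edges in `s`. -/
def Branch (G : SimpleGraph V) (s : Finset (Sym2 V)) : ℕ → V → V → Prop
  | 0, x, y => s(x, y) ∈ s
  | k + 1, x, y => s(x, y) ∈ s ∧ ∃ z ∈ (nbrs G y).erase x, Branch G s k y z

lemma mem_branchEdges_self (G : SimpleGraph V) (k : ℕ) (x y : V) :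
    s(x, y) ∈ branchEdges G k x y := by
  cases k <;> simp [branchEdges]

lemma Branch.edge_mem {G : SimpleGraph V} {s : Finset (Sym2 V)} {k : ℕ} {x y : V}
    (h : Branch G s k x y) : s(x, y) ∈ s := by
  cases k with
  | zero => exact h
  | succ k => exact h.1

lemma depOn_branch (G : SimpleGraph V) (k : ℕ) (x y : V) :
    DepOn (branchEdges G k x y) (fun s => Branch G s k x y) := by
  induction k generalizing x y with
  | zero => intro s s' h; simpa [Branch, branchEdges] using h
  | succ k ih =>
    intro s s' h
    have h1 := h _ (mem_branchEdges_self G (k + 1) x y)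
    have h2 : ∀ z ∈ (nbrs G y).erase x, Branch G s k y z = Branch G s' k y z := fun z hz =>
      ih y z s s' fun e he => h e (Finset.mem_insert_of_mem (Finset.mem_biUnion.2 ⟨z, hz, he⟩))
    simp only [Branch, h1, eq_iff_iff]
    exact and_congr_right fun _ => exists_congr fun z => and_congr_right fun hz => by rw [h2 z hz]

lemma exists_path_of_mem_branchEdges {G : SimpleGraph V} {g : ℕ} (hg : GirthGe G g) {k : ℕ}
    {x y : V} (hxy : G.Adj x y) (hk : k + 2 < g) {e : Sym2 V} (he : e ∈ branchEdges G k x y)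
    {a : V} (ha : a ∈ e) (hax : a ≠ x) :
    ∃ w : G.Walk y a, (SimpleGraph.Walk.cons hxy w).IsPath ∧ w.length ≤ k := by
  have base : ∀ e' : Sym2 V, e' = s(x, y) → a ∈ e' →
      ∃ w : G.Walk y a, (SimpleGraph.Walk.cons hxy w).IsPath ∧ w.length ≤ k := by
    rintro _ rfl h
    obtain rfl : a = y := (Sym2.mem_iff.1 h).resolve_left hax
    exact ⟨SimpleGraph.Walk.nil, by simp [SimpleGraph.Walk.cons_isPath_iff, hxy.ne], by simp⟩
  induction k generalizing x y with
  | zero => exact base e (Finset.mem_singleton.1 he) ha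
  | succ k ih =>
    rcases Finset.mem_insert.1 he with h | h
    · exact base e h ha
    obtain ⟨z, hz, hez⟩ := Finset.mem_biUnion.1 h
    have hzx := Finset.ne_of_mem_erase hz
    have hyz : G.Adj y z := mem_nbrs.1 (Finset.mem_of_mem_erase hz)
    by_cases hay : a = y
    · subst hay
      exact ⟨SimpleGraph.Walk.nil, by simp [SimpleGraph.Walk.cons_isPath_iff, hxy.ne], by simp⟩
    obtain ⟨w, hw, hl⟩ := ih hyz (by omega) hez hay (by
      rintro _ rfl h
      obtain rfl : a = z := (Sym2.mem_iff.1 h).resolve_left hay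
      exact ⟨SimpleGraph.Walk.nil, by simp [SimpleGraph.Walk.cons_isPath_iff, hyz.ne], by simp⟩)
    exact ⟨SimpleGraph.Walk.cons hyz w, hg.cons_isPath hxy hyz hzx w hw (by omega),
      by simpa using hl⟩

lemma branchEdges_subset_edgeSet {G : SimpleGraph V} {k : ℕ} {x y : V} (hxy : G.Adj x y)
    {e : Sym2 V} (he : e ∈ branchEdges G k x y) : e ∈ G.edgeSet := by
  induction k generalizing x y with
  | zero => rw [Finset.mem_singleton.1 he]; exact hxy
  | succ k ih =>
    rcases Finset.mem_insert.1 he with h | h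
    · rw [h]; exact hxy
    · obtain ⟨z, hz, hez⟩ := Finset.mem_biUnion.1 h
      exact ih (mem_nbrs.1 (Finset.mem_of_mem_erase hz)) hez

lemma disjoint_branchEdges {G : SimpleGraph V} {g : ℕ} (hg : GirthGe G g) {k : ℕ}
    (hk : 2 * k + 2 < g) {y z z' : V} (hz : G.Adj y z) (hz' : G.Adj y z') (hne : z ≠ z') :
    Disjoint (branchEdges G k y z) (branchEdges G k y z') := by
  rw [Finset.disjoint_left]
  intro e he he'
  obtain ⟨a, hae, hay⟩ := exists_mem_ne_of_mem_edgeSet (branchEdges_subset_edgeSet hz he) y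
  obtain ⟨w, hw, hl⟩ := exists_path_of_mem_branchEdges hg hz (by omega) he hae hay
  obtain ⟨w', hw', hl'⟩ := exists_path_of_mem_branchEdges hg hz' (by omega) he' hae hay
  exact hne (hg.snd_unique hz hz' w w' hw hw' (by omega))

lemma notMem_branchEdges {G : SimpleGraph V} {g : ℕ} (hg : GirthGe G g) {k : ℕ}
    (hk : k + 2 < g) {x y z : V} (hxy : G.Adj x y) (hz : G.Adj y z) (hne : z ≠ x) :
    s(x, y) ∉ branchEdges G k y z := by
  intro he
  obtain ⟨w, hw, hl⟩ := exists_path_of_mem_branchEdges hg hz (by omega) he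
    (Sym2.mem_mk_left x y) hxy.ne
  exact hne (hg.snd_unique hz hxy.symm w SimpleGraph.Walk.nil hw
    (by simp [SimpleGraph.Walk.cons_isPath_iff, hxy.ne'])
    (by simp only [SimpleGraph.Walk.length_nil]; omega))

end Exploration

/-- The probability that a branch of depth `k` dies out in the binomial branching process. -/
noncomputable def branchSeq (p : ℝ) (d : ℕ) : ℕ → ℝ
  | 0 => 1 - p
  | k + 1 => 1 - p + p * branchSeq p d k ^ (d - 1)

section Expectation

lemma DepOn.ite {α : Type*} {T : Finset α} {P : Finset α → Prop} [∀ s, Decidable (P s)]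
    (h : DepOn T P) (x y : ℝ) : DepOn T (fun s => if P s then x else y) := by
  intro s s' hs
  by_cases hP : P s
  · simp only [if_pos hP, if_pos (h s s' hs ▸ hP)]
  · simp only [if_neg hP, if_neg (h s s' hs ▸ hP)]

lemma depOn_mem {α : Type*} {T : Finset α} {e : α} (he : e ∈ T) :
    DepOn T (fun s => e ∈ s) :=
  fun _ _ h => propext (h e he)

variable {V : Type} [Fintype V]

lemma mem_edgeFinset' {G : SimpleGraph V} {e : Sym2 V} : e ∈ edgeFinset' G ↔ e ∈ G.edgeSet := by
  simp [edgeFinset']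

variable [DecidableEq V]

lemma pex_edge {G : SimpleGraph V} (p : ℝ) {e : Sym2 V} (he : e ∈ G.edgeSet) :
    pex p (edgeFinset' G) (fun s => if e ∈ s then 1 else 0) = p := by
  have h := pex_subset p (E := edgeFinset' G) (F := {e})
    (Finset.singleton_subset_iff.2 (mem_edgeFinset'.2 he))
  simpa using h

lemma card_nbrs_erase {G : SimpleGraph V} {d : ℕ} (hd : ∀ v, (nbrs G v).card = d) {x y : V}
    (hxy : G.Adj x y) : ((nbrs G y).erase x).card = d - 1 := by
  rw [Finset.card_erase_of_mem (mem_nbrs.2 hxy.symm), hd]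

lemma pex_not_branch {G : SimpleGraph V} {g d : ℕ} (hg : GirthGe G g)
    (hd : ∀ v, (nbrs G v).card = d) (p : ℝ) {k : ℕ} (hk : 2 * k + 2 < g) {x y : V}
    (hxy : G.Adj x y) :
    pex p (edgeFinset' G) (fun s => if ¬ Branch G s k x y then 1 else 0) = branchSeq p d k := by
  induction k generalizing x y with
  | zero =>
    have h : ∀ s : Finset (Sym2 V), (if ¬ Branch G s 0 x y then (1 : ℝ) else 0) =
        1 - if s(x, y) ∈ s then 1 else 0 := by
      intro s; by_cases h : s(x, y) ∈ s <;> simp [Branch, h]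
    simp only [h]
    rw [pex_sub, pex_const, pex_edge p hxy, branchSeq]
  | succ k ih =>
    have h : ∀ s : Finset (Sym2 V), (if ¬ Branch G s (k + 1) x y then (1 : ℝ) else 0) =
        1 - (if s(x, y) ∈ s then 1 else 0) + (if s(x, y) ∈ s then 1 else 0) *
          ∏ z ∈ (nbrs G y).erase x, if ¬ Branch G s k y z then 1 else 0 := by
      intro s
      rw [Finset.prod_ite_zero]
      by_cases h : s(x, y) ∈ s
      · simp only [Branch, h, true_and, not_exists, not_and, if_true, Finset.prod_const_one]
        simp
      · simp [Branch, h]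
    simp only [h]
    have hadj : ∀ z ∈ (nbrs G y).erase x, G.Adj y z := fun z hz =>
      mem_nbrs.1 (Finset.mem_of_mem_erase hz)
    have hdep : ∀ z ∈ (nbrs G y).erase x, DepOn (branchEdges G k y z)
        (fun s => if ¬ Branch G s k y z then (1 : ℝ) else 0) := fun z _ => by
      have := (depOn_branch G k y z).ite 0 1
      simpa only [ite_not] using this
    rw [pex_add, pex_sub, pex_const, pex_edge p hxy,
      pex_mul_of_disjoint p _ (T₁ := {s(x, y)}) _
        ((depOn_mem (Finset.mem_singleton_self s(x, y))).ite 1 0)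
        (depOn_prod _ _ _ hdep),
      pex_edge p hxy, pex_prod_of_disjoint p _ _ _ _ hdep,
      Finset.prod_congr rfl (fun z hz => ih (by omega) (hadj z hz)), Finset.prod_const,
      card_nbrs_erase hd hxy, branchSeq]
    · exact fun z hz z' hz' hne =>
        disjoint_branchEdges hg (by omega) (hadj z hz) (hadj z' hz') hne
    · rw [Finset.disjoint_singleton_left, Finset.mem_biUnion]
      rintro ⟨z, hz, he⟩
      exact notMem_branchEdges hg (by omega) hxy (hadj z hz) (Finset.ne_of_mem_erase hz) he

/-- There is a non-backtracking walk of length `k + 1` in `G` that starts at `v` and has all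
its edges in `s`. -/
def HasLong (G : SimpleGraph V) (s : Finset (Sym2 V)) (k : ℕ) (v : V) : Prop :=
  ∃ z ∈ nbrs G v, Branch G s k v z

/-- The edges seen by non-backtracking walks of length `k + 1` in `G` that start at `v`. -/
noncomputable def vertexEdges (G : SimpleGraph V) (k : ℕ) (v : V) : Finset (Sym2 V) :=
  (nbrs G v).biUnion (branchEdges G k v)

/-- The number of edges of `s` joining `v` to a neighbour in `G`. -/
noncomputable def degIn (G : SimpleGraph V) (s : Finset (Sym2 V)) (v : V) : ℝ :=
  ∑ z ∈ nbrs G v, if s(v, z) ∈ s then 1 else 0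

lemma depOn_hasLong (G : SimpleGraph V) (k : ℕ) (v : V) :
    DepOn (vertexEdges G k v) (fun s => HasLong G s k v) := by
  intro s s' h
  simp only [HasLong, eq_iff_iff]
  refine exists_congr fun z => and_congr_right fun hz => ?_
  exact iff_of_eq (depOn_branch G k v z s s'
    fun e he => h e (Finset.mem_biUnion.2 ⟨z, hz, he⟩))

lemma depOn_degIn (G : SimpleGraph V) (k : ℕ) (v : V) :
    DepOn (vertexEdges G k v) (fun s => degIn G s v) := by
  intro s s' h
  refine Finset.sum_congr rfl fun z hz => ?_
  exact (depOn_mem (Finset.mem_biUnion.2 ⟨z, hz, mem_branchEdges_self G k v z⟩)).ite 1 0 s s' h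

lemma ite_not_hasLong (G : SimpleGraph V) (s : Finset (Sym2 V)) (k : ℕ) (v : V) :
    (if HasLong G s k v then (1 : ℝ) else 0) =
      1 - ∏ z ∈ nbrs G v, if ¬ Branch G s k v z then 1 else 0 := by
  rw [Finset.prod_ite_zero, Finset.prod_const_one]
  by_cases h : HasLong G s k v
  · have h' := h
    obtain ⟨z, hz, hb⟩ := h'
    rw [if_pos h, if_neg (fun h2 => h2 z hz hb), sub_zero]
  · rw [if_neg h, if_pos (fun z hz hb => h ⟨z, hz, hb⟩), sub_self]

lemma depOn_not_branch (G : SimpleGraph V) (k : ℕ) (x y : V) : DepOn (branchEdges G k x y)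
    (fun s => if ¬ Branch G s k x y then (1 : ℝ) else 0) := by
  simpa only [ite_not] using (depOn_branch G k x y).ite 0 1

lemma pex_hasLong {G : SimpleGraph V} {g d : ℕ} (hg : GirthGe G g)
    (hd : ∀ v, (nbrs G v).card = d) (p : ℝ) {k : ℕ} (hk : 2 * k + 2 < g) (v : V) :
    pex p (edgeFinset' G) (fun s => if HasLong G s k v then 1 else 0) =
      1 - branchSeq p d k ^ d := by
  simp only [ite_not_hasLong]
  rw [pex_sub, pex_const, pex_prod_of_disjoint p _ _ _ _ (fun z _ => depOn_not_branch G k v z),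
      Finset.prod_congr rfl (fun z hz => pex_not_branch hg hd p hk (mem_nbrs.1 hz)),
      Finset.prod_const, hd]
  exact fun z hz z' hz' hne => disjoint_branchEdges hg hk (mem_nbrs.1 hz) (mem_nbrs.1 hz') hne

lemma pex_degIn_hasLong {G : SimpleGraph V} {g d : ℕ} (hg : GirthGe G g)
    (hd : ∀ v, (nbrs G v).card = d) (p : ℝ) {k : ℕ} (hk : 2 * k + 2 < g) (v : V) :
    pex p (edgeFinset' G) (fun s => degIn G s v * if HasLong G s k v then 1 else 0) =
      d * (p - (branchSeq p d k - (1 - p)) * branchSeq p d k ^ (d - 1)) := by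
  have h : ∀ s : Finset (Sym2 V), (degIn G s v * if HasLong G s k v then 1 else 0) =
      ∑ z ∈ nbrs G v, ((if s(v, z) ∈ s then (1 : ℝ) else 0) -
        ((if ¬ Branch G s k v z then (1 : ℝ) else 0) -
          (1 - if s(v, z) ∈ s then (1 : ℝ) else 0)) *
        ∏ z' ∈ (nbrs G v).erase z, if ¬ Branch G s k v z' then 1 else 0) := by
    intro s
    rw [ite_not_hasLong, degIn, Finset.sum_mul]
    refine Finset.sum_congr rfl fun z hz => ?_
    rw [← Finset.mul_prod_erase _ _ hz]
    by_cases h1 : s(v, z) ∈ s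
    · simp only [h1, if_true]; ring
    · have h2 : ¬ Branch G s k v z := fun h => h1 h.edge_mem
      simp [h1, h2]
  simp only [h]
  rw [pex_sum]
  have hz1 : ∀ z ∈ nbrs G v, pex p (edgeFinset' G) (fun s => (if s(v, z) ∈ s then (1 : ℝ) else 0) -
        ((if ¬ Branch G s k v z then (1 : ℝ) else 0) -
          (1 - if s(v, z) ∈ s then (1 : ℝ) else 0)) *
        ∏ z' ∈ (nbrs G v).erase z, if ¬ Branch G s k v z' then 1 else 0) =
      p - (branchSeq p d k - (1 - p)) * branchSeq p d k ^ (d - 1) := by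
    intro z hz
    have hvz : G.Adj v z := mem_nbrs.1 hz
    have hdep : DepOn (branchEdges G k v z)
        (fun s => (if ¬ Branch G s k v z then (1 : ℝ) else 0) -
          (1 - if s(v, z) ∈ s then (1 : ℝ) else 0)) := by
      intro s s' hs
      have h1 := depOn_not_branch G k v z s s' hs
      have h2 := (depOn_mem (mem_branchEdges_self G k v z)).ite 1 0 s s' hs
      simp only at h1 h2 ⊢
      rw [h1, h2]
    have hadj : ∀ z' ∈ (nbrs G v).erase z, G.Adj v z' := fun z' hz' =>
      mem_nbrs.1 (Finset.mem_of_mem_erase hz')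
    rw [pex_sub, pex_edge p hvz, pex_mul_of_disjoint p _ _ hdep
      (depOn_prod _ _ _ fun z' _ => depOn_not_branch G k v z'), pex_sub, pex_sub, pex_const,
      pex_edge p hvz, pex_not_branch hg hd p hk hvz,
      pex_prod_of_disjoint p _ _ _ _ (fun z' _ => depOn_not_branch G k v z'),
      Finset.prod_congr rfl (fun z' hz' => pex_not_branch hg hd p hk (hadj z' hz')),
      Finset.prod_const, card_nbrs_erase hd hvz.symm]
    · exact fun a ha b hb hne => disjoint_branchEdges hg hk (hadj a ha) (hadj b hb) hne
    · rw [Finset.disjoint_biUnion_right]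
      exact fun a ha => disjoint_branchEdges hg hk hvz (hadj a ha) (Finset.ne_of_mem_erase ha).symm
  rw [Finset.sum_congr rfl hz1, Finset.sum_const, hd, nsmul_eq_mul]

end Expectation

section Local

variable {V : Type} [Fintype V]

/-- The vertices joined to `a` by a walk of length at most `k`. -/
noncomputable def walkBall (G : SimpleGraph V) (k : ℕ) (a : V) : Finset V :=
  Finset.univ.filter (fun u => ∃ w : G.Walk a u, w.length ≤ k)

lemma mem_walkBall {G : SimpleGraph V} {k : ℕ} {a u : V} :
    u ∈ walkBall G k a ↔ ∃ w : G.Walk a u, w.length ≤ k := by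
  simp [walkBall]

lemma card_walkBall_le {G : SimpleGraph V} {d : ℕ} (hd : ∀ v, (nbrs G v).card ≤ d) (k : ℕ)
    (a : V) : (walkBall G k a).card ≤ (d + 1) ^ k := by
  induction k generalizing a with
  | zero =>
    have : walkBall G 0 a ⊆ {a} := by
      intro u hu
      obtain ⟨w, hw⟩ := mem_walkBall.1 hu
      rw [Finset.mem_singleton]
      exact (SimpleGraph.Walk.eq_of_length_eq_zero (Nat.le_zero.1 hw)).symm
    simpa using Finset.card_le_card this
  | succ k ih =>
    have hsub : walkBall G (k + 1) a ⊆ (insert a (nbrs G a)).biUnion (walkBall G k) := by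
      intro u hu
      obtain ⟨w, hw⟩ := mem_walkBall.1 hu
      rw [Finset.mem_biUnion]
      cases w with
      | nil => exact ⟨a, Finset.mem_insert_self _ _, mem_walkBall.2 ⟨.nil, by simp⟩⟩
      | cons h w =>
        exact ⟨_, Finset.mem_insert_of_mem (mem_nbrs.2 h), mem_walkBall.2 ⟨w, by simpa using hw⟩⟩
    calc _ ≤ _ := Finset.card_le_card hsub
      _ ≤ (insert a (nbrs G a)).card * (d + 1) ^ k :=
          Finset.card_biUnion_le_card_mul _ _ _ fun x _ => ih x
      _ ≤ (d + 1) * (d + 1) ^ k := by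
          gcongr
          exact (Finset.card_insert_le _ _).trans (Nat.succ_le_succ (hd a))
      _ = (d + 1) ^ (k + 1) := by ring

lemma fromEdgeSet_le {G : SimpleGraph V} {s : Finset (Sym2 V)} (hs : s ⊆ edgeFinset' G) :
    SimpleGraph.fromEdgeSet (↑s : Set (Sym2 V)) ≤ G := by
  intro x y h
  exact mem_edgeFinset'.1 (hs (SimpleGraph.fromEdgeSet_adj _ |>.1 h).1)

variable [DecidableEq V]

lemma card_edgeFinset'_le {G : SimpleGraph V} {d : ℕ} (hd : ∀ v, (nbrs G v).card ≤ d) :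
    (edgeFinset' G).card ≤ d * Fintype.card V := by
  have hsub : edgeFinset' G ⊆
      Finset.univ.biUnion (fun v => (nbrs G v).image fun z => s(v, z)) := by
    intro e he
    rw [mem_edgeFinset'] at he
    induction e with
    | _ u v =>
      exact Finset.mem_biUnion.2 ⟨u, Finset.mem_univ _,
        Finset.mem_image.2 ⟨v, mem_nbrs.2 he, rfl⟩⟩
  calc _ ≤ _ := Finset.card_le_card hsub
    _ ≤ (Finset.univ : Finset V).card * d := Finset.card_biUnion_le_card_mul _ _ _ fun v _ =>
        Finset.card_image_le.trans (hd v)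
    _ = _ := by rw [Finset.card_univ, mul_comm]

lemma card_filter_mem_vertexEdges_le {G : SimpleGraph V} {g d : ℕ} (hg : GirthGe G g)
    (hd : ∀ v, (nbrs G v).card ≤ d) {k : ℕ} (hk : k + 2 < g) (e : Sym2 V) :
    (Finset.univ.filter fun v => e ∈ vertexEdges G k v).card ≤ 2 * (d + 1) ^ (k + 1) := by
  induction e with
  | _ a b =>
  have hsub : (Finset.univ.filter fun v => s(a, b) ∈ vertexEdges G k v) ⊆
      walkBall G (k + 1) a ∪ walkBall G (k + 1) b := by
    intro v hv
    obtain ⟨z, hz, he⟩ := Finset.mem_biUnion.1 (Finset.mem_filter.1 hv).2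
    have hvz := mem_nbrs.1 hz
    obtain ⟨u, hu, huv⟩ := exists_mem_ne_of_mem_edgeSet (branchEdges_subset_edgeSet hvz he) v
    obtain ⟨w, -, hl⟩ := exists_path_of_mem_branchEdges hg hvz hk he hu huv
    have hv' : v ∈ walkBall G (k + 1) u :=
      mem_walkBall.2 ⟨(SimpleGraph.Walk.cons hvz w).reverse, by simpa using hl⟩
    rcases Sym2.mem_iff.1 hu with rfl | rfl
    · exact Finset.mem_union_left _ hv'
    · exact Finset.mem_union_right _ hv'
  have h1 := card_walkBall_le hd (k + 1) a
  have h2 := card_walkBall_le hd (k + 1) b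
  have h3 := (Finset.card_le_card hsub).trans (Finset.card_union_le _ _)
  omega

/-- Sums of bounded local functions change by a bounded amount when an edge is added. -/
lemma abs_sum_insert_sub_le {G : SimpleGraph V} {g d : ℕ} (hg : GirthGe G g)
    (hd : ∀ v, (nbrs G v).card ≤ d) {k : ℕ} (hk : k + 2 < g) {D : ℝ} (hD : 0 ≤ D)
    (φ : V → Finset (Sym2 V) → ℝ) (hφ : ∀ v, DepOn (vertexEdges G k v) (φ v))
    (h0 : ∀ v s, 0 ≤ φ v s) (h1 : ∀ v s, φ v s ≤ D) (e : Sym2 V) (s : Finset (Sym2 V)) :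
    |(∑ v, φ v (insert e s)) - ∑ v, φ v s| ≤ D * (2 * (d + 1) ^ (k + 1)) := by
  have hterm : ∀ v, |φ v (insert e s) - φ v s| ≤ if e ∈ vertexEdges G k v then D else 0 := by
    intro v
    split_ifs with he
    · rw [abs_le]
      constructor <;> linarith [h0 v s, h0 v (insert e s), h1 v s, h1 v (insert e s)]
    · rw [hφ v (insert e s) s, sub_self, abs_zero]
      intro e' he'
      have : e' ≠ e := fun h => he (h ▸ he')
      simp [this]
  rw [← Finset.sum_sub_distrib]
  calc _ ≤ ∑ v, |φ v (insert e s) - φ v s| := Finset.abs_sum_le_sum_abs _ _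
    _ ≤ ∑ v, if e ∈ vertexEdges G k v then D else 0 := Finset.sum_le_sum fun v _ => hterm v
    _ = D * (Finset.univ.filter fun v => e ∈ vertexEdges G k v).card := by
        rw [← Finset.sum_filter, Finset.sum_const, nsmul_eq_mul, mul_comm]
    _ ≤ _ := by
        gcongr
        exact_mod_cast card_filter_mem_vertexEdges_le hg hd hk e

lemma mem_compVerts_mk {H : SimpleGraph V} {u v : V} :
    u ∈ compVerts H (H.connectedComponentMk v) ↔ H.Reachable v u := by
  simp [compVerts, SimpleGraph.ConnectedComponent.eq, SimpleGraph.reachable_comm]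

lemma Branch.exists_path {G : SimpleGraph V} {g : ℕ} (hg : GirthGe G g) {s : Finset (Sym2 V)}
    (hs : s ⊆ edgeFinset' G) {k : ℕ} (hk : k + 2 < g) {x y : V} (h : Branch G s k x y) :
    ∃ (hxy : (SimpleGraph.fromEdgeSet (↑s : Set (Sym2 V))).Adj x y) (u : V)
      (w : (SimpleGraph.fromEdgeSet (↑s : Set (Sym2 V))).Walk y u),
      (SimpleGraph.Walk.cons hxy w).IsPath ∧ w.length = k := by
  have hxy : (SimpleGraph.fromEdgeSet (↑s : Set (Sym2 V))).Adj x y := by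
    rw [SimpleGraph.fromEdgeSet_adj]
    exact ⟨h.edge_mem, G.ne_of_adj (mem_edgeFinset'.1 (hs h.edge_mem))⟩
  refine ⟨hxy, ?_⟩
  induction k generalizing x y with
  | zero =>
    exact ⟨y, SimpleGraph.Walk.nil, by simp [SimpleGraph.Walk.cons_isPath_iff, hxy.ne], rfl⟩
  | succ k ih =>
    obtain ⟨-, z, hz, hb⟩ := h
    have hyz : (SimpleGraph.fromEdgeSet (↑s : Set (Sym2 V))).Adj y z := by
      rw [SimpleGraph.fromEdgeSet_adj]
      exact ⟨hb.edge_mem, G.ne_of_adj (mem_edgeFinset'.1 (hs hb.edge_mem))⟩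
    obtain ⟨u, w, hw, hl⟩ := ih (by omega) hb hyz
    exact ⟨u, SimpleGraph.Walk.cons hyz w,
      (hg.mono (fromEdgeSet_le hs)).cons_isPath hxy hyz (Finset.ne_of_mem_erase hz) w hw
        (by omega), by simpa using hl⟩

lemma HasLong.le_card {G : SimpleGraph V} {g : ℕ} (hg : GirthGe G g) {s : Finset (Sym2 V)}
    (hs : s ⊆ edgeFinset' G) {k : ℕ} (hk : k + 2 < g) {v : V} (h : HasLong G s k v) :
    k + 2 ≤ (compVerts (SimpleGraph.fromEdgeSet (↑s : Set (Sym2 V)))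
      ((SimpleGraph.fromEdgeSet (↑s : Set (Sym2 V))).connectedComponentMk v)).card := by
  obtain ⟨z, -, hb⟩ := h
  obtain ⟨hvz, u, w, hw, hl⟩ := hb.exists_path hg hs hk
  have hsub : (SimpleGraph.Walk.cons hvz w).support.toFinset ⊆
      compVerts (SimpleGraph.fromEdgeSet (↑s : Set (Sym2 V)))
      ((SimpleGraph.fromEdgeSet (↑s : Set (Sym2 V))).connectedComponentMk v) := by
    intro x hx
    rw [mem_compVerts_mk]
    exact ((SimpleGraph.Walk.cons hvz w).takeUntil x (List.mem_toFinset.1 hx)).reachable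
  have := Finset.card_le_card hsub
  rwa [List.toFinset_card_of_nodup hw.support_nodup, SimpleGraph.Walk.length_support,
    SimpleGraph.Walk.length_cons, hl] at this

lemma branch_of_path {G : SimpleGraph V} {s : Finset (Sym2 V)} (hs : s ⊆ edgeFinset' G) {k : ℕ}
    {x y u : V} (hxy : (SimpleGraph.fromEdgeSet (↑s : Set (Sym2 V))).Adj x y)
    (w : (SimpleGraph.fromEdgeSet (↑s : Set (Sym2 V))).Walk y u)
    (hw : (SimpleGraph.Walk.cons hxy w).IsPath) (hl : k ≤ w.length) : Branch G s k x y := by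
  induction k generalizing x y with
  | zero => exact (SimpleGraph.fromEdgeSet_adj _ |>.1 hxy).1
  | succ k ih =>
    refine ⟨(SimpleGraph.fromEdgeSet_adj _ |>.1 hxy).1, ?_⟩
    cases w with
    | nil => simp at hl
    | @cons _ z _ hyz w =>
      rw [SimpleGraph.Walk.cons_isPath_iff] at hw
      refine ⟨z, Finset.mem_erase.2 ⟨?_, mem_nbrs.2 (fromEdgeSet_le hs hyz)⟩,
        ih hyz w hw.1 (by simpa using hl)⟩
      rintro rfl
      exact hw.2 (by simp)

lemma hasLong_of_card_lt {G : SimpleGraph V} {d : ℕ} (hd : ∀ v, (nbrs G v).card ≤ d)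
    {s : Finset (Sym2 V)} (hs : s ⊆ edgeFinset' G) {k : ℕ} {v : V}
    (h : (d + 1) ^ k < (compVerts (SimpleGraph.fromEdgeSet (↑s : Set (Sym2 V)))
      ((SimpleGraph.fromEdgeSet (↑s : Set (Sym2 V))).connectedComponentMk v)).card) :
    HasLong G s k v := by
  set H := SimpleGraph.fromEdgeSet (↑s : Set (Sym2 V)) with hH
  obtain ⟨u, hu, hub⟩ : ∃ u ∈ compVerts H (H.connectedComponentMk v), u ∉ walkBall G k v := by
    by_contra! hcon
    exact absurd (Finset.card_le_card hcon) (not_le.2 (lt_of_le_of_lt (card_walkBall_le hd k v) h))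
  obtain ⟨w⟩ := mem_compVerts_mk.1 hu
  obtain ⟨P, hP⟩ := w.toPath
  have hl : ¬ P.length ≤ k := fun hl =>
    hub (mem_walkBall.2 ⟨P.mapLe (fromEdgeSet_le hs), by simpa using hl⟩)
  cases P with
  | nil => simp at hl
  | @cons _ z _ hvz P =>
    rw [SimpleGraph.Walk.length_cons] at hl
    exact ⟨z, mem_nbrs.2 (fromEdgeSet_le hs hvz), branch_of_path hs hvz P hP (by omega)⟩

end Local

section Expansion

variable {V : Type} [Fintype V]

/-- The vertices at distance at most `k` from `A` in `H`. -/
noncomputable def thicken (H : SimpleGraph V) (A : Finset V) (k : ℕ) : Finset V :=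
  Finset.univ.filter (fun v => ∃ a ∈ A, ∃ w : H.Walk a v, w.length ≤ k)

lemma mem_thicken {H : SimpleGraph V} {A : Finset V} {k : ℕ} {v : V} :
    v ∈ thicken H A k ↔ ∃ a ∈ A, ∃ w : H.Walk a v, w.length ≤ k := by
  simp [thicken]

lemma subset_thicken (H : SimpleGraph V) (A : Finset V) (k : ℕ) : A ⊆ thicken H A k :=
  fun a ha => mem_thicken.2 ⟨a, ha, .nil, by simp⟩

lemma thicken_mono (H : SimpleGraph V) (A : Finset V) {k l : ℕ} (h : k ≤ l) :
    thicken H A k ⊆ thicken H A l := by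
  intro v hv
  obtain ⟨a, ha, w, hw⟩ := mem_thicken.1 hv
  exact mem_thicken.2 ⟨a, ha, w, hw.trans h⟩

lemma mem_thicken_succ {H : SimpleGraph V} {A : Finset V} {k : ℕ} {x y : V}
    (hx : x ∈ thicken H A k) (hxy : H.Adj x y) : y ∈ thicken H A (k + 1) := by
  obtain ⟨a, ha, w, hw⟩ := mem_thicken.1 hx
  exact mem_thicken.2 ⟨a, ha, w.concat hxy, by rw [SimpleGraph.Walk.length_concat]; omega⟩

variable [DecidableEq V]

lemma cutCard_thicken_le {G : SimpleGraph V} {d : ℕ} (hd : ∀ v, (nbrs G v).card ≤ d)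
    (F : Finset (Sym2 V)) (A : Finset V) (k : ℕ) :
    cutCard G (thicken (G.deleteEdges ↑F) A k) + d * (thicken (G.deleteEdges ↑F) A k).card ≤
      F.card + d * (thicken (G.deleteEdges ↑F) A (k + 1)).card := by
  set S := thicken (G.deleteEdges (↑F : Set (Sym2 V))) A k with hS
  set S' := thicken (G.deleteEdges (↑F : Set (Sym2 V))) A (k + 1) with hS'
  have hsub : (edgeFinset' G).filter (fun e => ∃ x ∈ S, ∃ y, y ∉ S ∧ e = s(x, y)) ⊆
      F ∪ (S' \ S).biUnion (fun y => (nbrs G y).image fun z => s(y, z)) := by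
    intro e he
    obtain ⟨heG, x, hx, y, hy, rfl⟩ := Finset.mem_filter.1 he
    have hxy : G.Adj x y := mem_edgeFinset'.1 heG
    by_cases hF : s(x, y) ∈ F
    · exact Finset.mem_union_left _ hF
    · refine Finset.mem_union_right _ (Finset.mem_biUnion.2 ⟨y, Finset.mem_sdiff.2 ⟨?_, hy⟩,
        Finset.mem_image.2 ⟨x, mem_nbrs.2 hxy.symm, Sym2.eq_swap⟩⟩)
      exact mem_thicken_succ hx (SimpleGraph.deleteEdges_adj.2 ⟨hxy, by simpa using hF⟩)
  have h1 := (Finset.card_le_card hsub).trans (Finset.card_union_le _ _)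
  have h2 : ((S' \ S).biUnion (fun y => (nbrs G y).image fun z => s(y, z))).card ≤
      (S' \ S).card * d := Finset.card_biUnion_le_card_mul _ _ _ fun v _ =>
        Finset.card_image_le.trans (hd v)
  have h3 : (S' \ S).card + S.card = S'.card :=
    Finset.card_sdiff_add_card_eq_card (thicken_mono _ _ (Nat.le_succ k))
  have h4 : cutCard G S ≤ F.card + (S' \ S).card * d := by
    unfold cutCard
    exact h1.trans (by omega)
  rw [← h3]
  linarith

lemma half_lt_card_thicken {G : SimpleGraph V} {b : ℝ} {d : ℕ} (hG : IsExpander G b d)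
    (hb : 0 < b) (hd0 : 0 < d) {r : ℝ} {F : Finset (Sym2 V)} (hF : F.card ≤ b * r / 2)
    {A : Finset V} (hA : r ≤ A.card) {K : ℕ} (hK : d * (Fintype.card V : ℝ) < K * (b * r)) :
    (Fintype.card V : ℝ) / 2 < (thicken (G.deleteEdges (↑F : Set (Sym2 V))) A K).card := by
  have hd : ∀ v, (nbrs G v).card ≤ d := fun v => (card_nbrs G v).trans_le (hG.1 v)
  have key : ∀ k : ℕ,
      (Fintype.card V : ℝ) / 2 < (thicken (G.deleteEdges (↑F : Set (Sym2 V))) A k).card ∨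
      k * (b * r / 2) ≤ d * (thicken (G.deleteEdges (↑F : Set (Sym2 V))) A k).card := by
    intro k
    induction k with
    | zero => right; simp only [Nat.cast_zero, zero_mul]; positivity
    | succ k ih =>
      have hm : ((thicken (G.deleteEdges (↑F : Set (Sym2 V))) A k).card : ℝ) ≤
          (thicken (G.deleteEdges (↑F : Set (Sym2 V))) A (k + 1)).card := by
        exact_mod_cast Finset.card_le_card (thicken_mono _ _ (Nat.le_succ k))
      by_cases hc : (Fintype.card V : ℝ) / 2 <
          (thicken (G.deleteEdges (↑F : Set (Sym2 V))) A k).card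
      · left; exact hc.trans_le hm
      · right
        have h1 := ih.resolve_left hc
        have h2 := hG.2 _ (not_lt.1 hc)
        have h3 : (cutCard G (thicken (G.deleteEdges ↑F) A k) : ℝ) +
            d * (thicken (G.deleteEdges (↑F : Set (Sym2 V))) A k).card ≤
            F.card + d * (thicken (G.deleteEdges (↑F : Set (Sym2 V))) A (k + 1)).card := by
          exact_mod_cast cutCard_thicken_le hd F A k
        have h4 : (A.card : ℝ) ≤ (thicken (G.deleteEdges (↑F : Set (Sym2 V))) A k).card := by
          exact_mod_cast Finset.card_le_card (subset_thicken _ _ _)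
        have h5 : b * r ≤ b * (thicken (G.deleteEdges (↑F : Set (Sym2 V))) A k).card := by
          gcongr; exact hA.trans h4
        push_cast
        linarith
  rcases key K with h | h
  · exact h
  · have hd' : (0 : ℝ) < d := by exact_mod_cast hd0
    by_contra hcon
    have := mul_le_mul_of_nonneg_left (not_lt.1 hcon) hd'.le
    linarith

/-- In an expander, two large sets stay joined by a short walk after deleting few edges. -/
lemma exists_short_walk {G : SimpleGraph V} {b : ℝ} {d : ℕ} (hG : IsExpander G b d)
    (hb : 0 < b) (hd0 : 0 < d) {r : ℝ} {F : Finset (Sym2 V)} (hF : F.card ≤ b * r / 2)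
    {A B : Finset V} (hA : r ≤ A.card) (hB : r ≤ B.card) {K : ℕ}
    (hK : d * (Fintype.card V : ℝ) < K * (b * r)) :
    ∃ x ∈ A, ∃ y ∈ B, ∃ w : (G.deleteEdges (↑F : Set (Sym2 V))).Walk x y, w.length ≤ 2 * K := by
  have h1 := half_lt_card_thicken hG hb hd0 hF hA hK
  have h2 := half_lt_card_thicken hG hb hd0 hF hB hK
  have hnd : ¬ Disjoint (thicken (G.deleteEdges (↑F : Set (Sym2 V))) A K)
      (thicken (G.deleteEdges (↑F : Set (Sym2 V))) B K) := by
    intro hdis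
    have h3 := Finset.card_le_univ (thicken (G.deleteEdges (↑F : Set (Sym2 V))) A K ∪
      thicken (G.deleteEdges (↑F : Set (Sym2 V))) B K)
    rw [Finset.card_union_of_disjoint hdis] at h3
    have h4 : ((thicken (G.deleteEdges (↑F : Set (Sym2 V))) A K).card : ℝ) +
      (thicken (G.deleteEdges (↑F : Set (Sym2 V))) B K).card ≤ Fintype.card V := by
      exact_mod_cast h3
    linarith
  obtain ⟨z, hzA, hzB⟩ := Finset.not_disjoint_iff.1 hnd
  obtain ⟨x, hx, w, hw⟩ := mem_thicken.1 hzA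
  obtain ⟨y, hy, w', hw'⟩ := mem_thicken.1 hzB
  refine ⟨x, hx, y, hy, w.append w'.reverse, ?_⟩
  rw [SimpleGraph.Walk.length_append, SimpleGraph.Walk.length_reverse]
  omega

/-- Every graph whose edge set contains `Q` joins `A` to `B`. -/
def Joins (A B : Finset V) (Q : Finset (Sym2 V)) : Prop :=
  ∃ x ∈ A, ∃ y ∈ B, ∀ t : Finset (Sym2 V), Q ⊆ t →
    (SimpleGraph.fromEdgeSet (↑t : Set (Sym2 V))).Reachable x y

lemma exists_disjoint_joins {G : SimpleGraph V} {b : ℝ} {d : ℕ} (hG : IsExpander G b d)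
    (hb : 0 < b) (hd0 : 0 < d) {r : ℝ}
    {A B : Finset V} (hA : r ≤ A.card) (hB : r ≤ B.card) {K : ℕ}
    (hK : d * (Fintype.card V : ℝ) < K * (b * r)) (m : ℕ) (hm : m * (2 * K : ℝ) ≤ b * r / 2) :
    ∃ P : ℕ → Finset (Sym2 V),
      (∀ i < m, P i ⊆ edgeFinset' G ∧ (P i).card ≤ 2 * K ∧ Joins A B (P i)) ∧
      ∀ i < m, ∀ j < m, i ≠ j → Disjoint (P i) (P j) := by
  induction m with
  | zero => exact ⟨fun _ => ∅, by simp, by simp⟩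
  | succ m ih =>
    have hm' : m * (2 * K : ℝ) ≤ b * r / 2 := by
      push_cast at hm
      have : (0 : ℝ) ≤ K := Nat.cast_nonneg K
      linarith
    obtain ⟨P, hP, hdis⟩ := ih hm'
    set F := (Finset.range m).biUnion P with hFdef
    have hF : (F.card : ℝ) ≤ b * r / 2 := by
      refine le_trans ?_ hm'
      have : F.card ≤ (Finset.range m).card * (2 * K) := Finset.card_biUnion_le_card_mul _ _ _
        fun i hi => (hP i (Finset.mem_range.1 hi)).2.1
      rw [Finset.card_range] at this
      exact_mod_cast this
    obtain ⟨x, hx, y, hy, w, hw⟩ := exists_short_walk hG hb hd0 hF hA hB hK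
    have hwe : ∀ e ∈ w.edges, e ∈ G.edgeSet ∧ e ∉ F := by
      intro e he
      have := w.edges_subset_edgeSet he
      rw [SimpleGraph.edgeSet_deleteEdges] at this
      exact ⟨this.1, by simpa using this.2⟩
    have hdisQ : ∀ i < m, Disjoint (P i) w.edges.toFinset := by
      intro i hi
      rw [Finset.disjoint_right]
      intro e he hei
      exact (hwe e (List.mem_toFinset.1 he)).2
        (Finset.mem_biUnion.2 ⟨i, Finset.mem_range.2 hi, hei⟩)
    refine ⟨fun i => if i = m then w.edges.toFinset else P i, ?_, ?_⟩
    · intro i hi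
      by_cases him : i = m
      · simp only [him, if_true]
        refine ⟨fun e he => mem_edgeFinset'.2 (hwe e (List.mem_toFinset.1 he)).1,
          (List.toFinset_card_le _).trans (by rwa [SimpleGraph.Walk.length_edges]), x, hx, y, hy,
          fun t ht => ?_⟩
        refine (w.transfer (SimpleGraph.fromEdgeSet (↑t : Set (Sym2 V))) fun e he => ?_).reachable
        rw [SimpleGraph.edgeSet_fromEdgeSet]
        exact ⟨ht (List.mem_toFinset.2 he), G.not_isDiag_of_mem_edgeSet (hwe e he).1⟩
      · simp only [him, if_false]
        exact hP i (by omega)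
    · intro i hi j hj hij
      by_cases him : i = m
      · have hjm : j ≠ m := fun h => hij (him.trans h.symm)
        simp only [him, if_true, hjm, if_false]
        exact (hdisQ j (by omega)).symm
      · by_cases hjm : j = m
        · simp only [him, if_false, hjm, if_true]
          exact hdisQ i (by omega)
        · simp only [him, hjm, if_false]
          exact hdis i (by omega) j (by omega) hij

lemma pex_not_joined_le {G : SimpleGraph V} {b : ℝ} {d : ℕ} (hG : IsExpander G b d)
    (hb : 0 < b) (hd0 : 0 < d) {δ : ℝ} (hδ0 : 0 ≤ δ) (hδ1 : δ ≤ 1) {r : ℝ}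
    {A B : Finset V} (hA : r ≤ A.card) (hB : r ≤ B.card) {K : ℕ}
    (hK : d * (Fintype.card V : ℝ) < K * (b * r)) (m : ℕ) (hm : m * (2 * K : ℝ) ≤ b * r / 2) :
    pex δ (edgeFinset' G) (fun t => if ¬ ∃ x ∈ A, ∃ y ∈ B,
      (SimpleGraph.fromEdgeSet (↑t : Set (Sym2 V))).Reachable x y then 1 else 0) ≤
      (1 - δ ^ (2 * K)) ^ m := by
  obtain ⟨P, hP, hdis⟩ := exists_disjoint_joins hG hb hd0 hA hB hK m hm
  have h1 : pex δ (edgeFinset' G) (fun t => if ¬ ∃ x ∈ A, ∃ y ∈ B,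
      (SimpleGraph.fromEdgeSet (↑t : Set (Sym2 V))).Reachable x y then 1 else 0) ≤
      pex δ (edgeFinset' G) (fun t => ∏ i ∈ Finset.range m, (1 - if P i ⊆ t then 1 else 0)) := by
    refine pex_mono hδ0 hδ1 fun t _ => ?_
    split_ifs with h
    · refine Finset.prod_nonneg fun i _ => ?_
      split_ifs <;> norm_num
    · refine le_of_eq (Finset.prod_eq_one fun i hi => ?_).symm
      rw [if_neg, sub_zero]
      intro hsub
      obtain ⟨x, hx, y, hy, hreach⟩ := (hP i (Finset.mem_range.1 hi)).2.2
      exact h ⟨x, hx, y, hy, hreach t hsub⟩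
  refine h1.trans ?_
  rw [pex_prod_of_disjoint δ _ _ P]
  · calc _ ≤ ∏ i ∈ Finset.range m, (1 - δ ^ (2 * K)) := by
          refine Finset.prod_le_prod (fun i hi => ?_) (fun i hi => ?_)
          all_goals
            have hi' := hP i (Finset.mem_range.1 hi)
            rw [pex_sub, pex_const, pex_subset δ hi'.1]
          · exact sub_nonneg.2 (pow_le_one₀ hδ0 hδ1)
          · exact sub_le_sub_left (pow_le_pow_of_le_one hδ0 hδ1 hi'.2.1) 1
      _ = _ := by rw [Finset.prod_const, Finset.card_range]
  · intro i _ s s' hs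
    have : P i ⊆ s ↔ P i ⊆ s' := forall_congr' fun e => forall_congr' fun he => hs e he
    simp only [this]
  · exact fun i hi j hj => hdis i (Finset.mem_range.1 hi) j (Finset.mem_range.1 hj)

end Expansion

section Merging

variable {V : Type} [Fintype V]

/-- The components of `H` with at least `K` vertices. -/
noncomputable def bigComps (H : SimpleGraph V) (K : ℕ) : Finset H.ConnectedComponent :=
  Finset.univ.filter fun c => K ≤ (compVerts H c).card

lemma mem_bigComps {H : SimpleGraph V} {K : ℕ} {c : H.ConnectedComponent} :
    c ∈ bigComps H K ↔ K ≤ (compVerts H c).card := by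
  simp [bigComps]

/-- The vertices lying in one of the components in `X`. -/
noncomputable def vertsOf (H : SimpleGraph V) (X : Finset H.ConnectedComponent) : Finset V :=
  Finset.univ.filter fun v => H.connectedComponentMk v ∈ X

/-- No partition of the components of `H` with at least `K` vertices into two families covering
at least `r` vertices each is left disconnected by the edges in `t`. -/
def Joined (H : SimpleGraph V) (K : ℕ) (r : ℝ) (t : Finset (Sym2 V)) : Prop :=
  ∀ X ⊆ bigComps H K, r ≤ (vertsOf H X).card → r ≤ (vertsOf H (bigComps H K \ X)).card →
    ∃ x ∈ vertsOf H X, ∃ y ∈ vertsOf H (bigComps H K \ X),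
      (SimpleGraph.fromEdgeSet (↑t : Set (Sym2 V))).Reachable x y

lemma mem_vertsOf {H : SimpleGraph V} {X : Finset H.ConnectedComponent} {v : V} :
    v ∈ vertsOf H X ↔ H.connectedComponentMk v ∈ X := by
  simp [vertsOf]

lemma mem_compVerts {H : SimpleGraph V} {c : H.ConnectedComponent} {v : V} :
    v ∈ compVerts H c ↔ H.connectedComponentMk v = c := by
  simp [compVerts]

lemma exists_comp_of_joined {H' H : SimpleGraph V} (hle : H' ≤ H) {t : Finset (Sym2 V)}
    (ht : SimpleGraph.fromEdgeSet (↑t : Set (Sym2 V)) ≤ H) {K : ℕ} {r : ℝ} (hr : 0 < r)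
    (hU : r ≤ (vertsOf H' (bigComps H' K)).card) (hJ : Joined H' K r t) :
    ∃ c : H.ConnectedComponent,
      ((vertsOf H' (bigComps H' K)).card : ℝ) ≤ (compVerts H c).card + 2 * r := by
  set U := vertsOf H' (bigComps H' K) with hUdef
  let f : Finset H.ConnectedComponent → Finset V :=
    fun X => U.filter fun v => H.connectedComponentMk v ∈ X
  obtain ⟨X, hX, hmin⟩ := Finset.exists_min_image
    (Finset.univ.filter fun X : Finset H.ConnectedComponent => r ≤ (f X).card) Finset.card
    ⟨Finset.univ, by simpa [f] using hU⟩
  have hrX : r ≤ (f X).card := (Finset.mem_filter.1 hX).2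
  obtain ⟨c, hc⟩ : X.Nonempty := by
    rw [Finset.nonempty_iff_ne_empty]
    rintro rfl
    simp [f] at hrX
    linarith
  have h1 : ((f (X.erase c)).card : ℝ) < r := by
    by_contra! hcon
    exact absurd (hmin (X.erase c) (Finset.mem_filter.2 ⟨Finset.mem_univ _, hcon⟩))
      (not_le.2 (Finset.card_erase_lt_of_mem hc))
  have h2 : ((U \ f X).card : ℝ) < r := by
    by_contra! hcon
    let Y := (f X).image H'.connectedComponentMk
    have hmem : ∀ v, v ∈ vertsOf H' Y → v ∈ f X := by
      intro v hv
      obtain ⟨w, hw, hwv⟩ := Finset.mem_image.1 (mem_vertsOf.1 hv)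
      obtain ⟨hwU, hwX⟩ := Finset.mem_filter.1 hw
      refine Finset.mem_filter.2 ⟨mem_vertsOf.2 (hwv ▸ mem_vertsOf.1 hwU), ?_⟩
      rwa [← SimpleGraph.ConnectedComponent.sound
        ((SimpleGraph.ConnectedComponent.exact hwv).mono hle)]
    have hYv : f X ⊆ vertsOf H' Y := fun v hv =>
      mem_vertsOf.2 (Finset.mem_image_of_mem _ hv)
    have hYc : U \ f X ⊆ vertsOf H' (bigComps H' K \ Y) := by
      intro v hv
      obtain ⟨hvU, hvX⟩ := Finset.mem_sdiff.1 hv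
      exact mem_vertsOf.2 (Finset.mem_sdiff.2
        ⟨mem_vertsOf.1 hvU, fun h => hvX (hmem v (mem_vertsOf.2 h))⟩)
    obtain ⟨x, hx, y, hy, hxy⟩ := hJ Y
      (fun _ hc' => by
        obtain ⟨w, hw, rfl⟩ := Finset.mem_image.1 hc'
        exact mem_vertsOf.1 (Finset.mem_filter.1 hw).1)
      (hrX.trans (by exact_mod_cast Finset.card_le_card hYv))
      (hcon.trans (by exact_mod_cast Finset.card_le_card hYc))
    have hy' := Finset.mem_sdiff.1 (mem_vertsOf.1 hy)
    refine hy'.2 (mem_vertsOf.1 (hYv (Finset.mem_filter.2 ⟨mem_vertsOf.2 hy'.1, ?_⟩)))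
    rw [← SimpleGraph.ConnectedComponent.sound (hxy.mono ht)]
    exact (Finset.mem_filter.1 (hmem x hx)).2
  refine ⟨c, ?_⟩
  have hsub : U ⊆ compVerts H c ∪ f (X.erase c) ∪ (U \ f X) := by
    intro v hv
    by_cases hvX : v ∈ f X
    · refine Finset.mem_union_left _ ?_
      by_cases hvc : H.connectedComponentMk v = c
      · exact Finset.mem_union_left _ (mem_compVerts.2 hvc)
      · exact Finset.mem_union_right _ (Finset.mem_filter.2
          ⟨hv, Finset.mem_erase.2 ⟨hvc, (Finset.mem_filter.1 hvX).2⟩⟩)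
    · exact Finset.mem_union_right _ (Finset.mem_sdiff.2 ⟨hv, hvX⟩)
  have h3 := (Finset.card_le_card hsub).trans ((Finset.card_union_le _ _).trans
    (Nat.add_le_add_right (Finset.card_union_le _ _) _))
  have h4 : (U.card : ℝ) ≤ (compVerts H c).card + (f (X.erase c)).card + (U \ f X).card := by
    exact_mod_cast h3
  linarith

lemma card_bigComps_mul_le (H : SimpleGraph V) (K : ℕ) :
    (bigComps H K).card * K ≤ Fintype.card V := by
  calc _ ≤ ∑ c ∈ bigComps H K, (compVerts H c).card := by
        rw [← smul_eq_mul]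
        exact Finset.card_nsmul_le_sum _ _ _ fun c hc => mem_bigComps.1 hc
    _ = ((bigComps H K).biUnion (compVerts H)).card := by
        rw [Finset.card_biUnion]
        intro c _ c' _ hcc
        refine Finset.disjoint_left.2 fun v hv hv' => hcc ?_
        rw [← mem_compVerts.1 hv, ← mem_compVerts.1 hv']
    _ ≤ _ := Finset.card_le_univ _

variable [DecidableEq V]

lemma pex_not_joined_comps_le {G : SimpleGraph V} {b : ℝ} {d : ℕ} (hG : IsExpander G b d)
    (hb : 0 < b) (hd0 : 0 < d) {δ : ℝ} (hδ0 : 0 ≤ δ) (hδ1 : δ ≤ 1) {r : ℝ}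
    {K : ℕ} (hK : d * (Fintype.card V : ℝ) < K * (b * r)) (m : ℕ)
    (hm : m * (2 * K : ℝ) ≤ b * r / 2) (H : SimpleGraph V) (M : ℕ) :
    pex δ (edgeFinset' G) (fun t => if ¬ Joined H M r t then 1 else 0) ≤
      2 ^ (bigComps H M).card * (1 - δ ^ (2 * K)) ^ m := by
  have hnn : 0 ≤ (1 - δ ^ (2 * K)) ^ m :=
    pow_nonneg (sub_nonneg.2 (pow_le_one₀ hδ0 hδ1)) m
  let F : Finset H.ConnectedComponent → Finset (Sym2 V) → ℝ := fun X t =>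
    if r ≤ (vertsOf H X).card ∧ r ≤ (vertsOf H (bigComps H M \ X)).card ∧
      ¬ ∃ x ∈ vertsOf H X, ∃ y ∈ vertsOf H (bigComps H M \ X),
        (SimpleGraph.fromEdgeSet (↑t : Set (Sym2 V))).Reachable x y then 1 else 0
  have hF : ∀ X t, 0 ≤ F X t := fun X t => by
    simp only [F]
    split_ifs <;> norm_num
  calc _ ≤ pex δ (edgeFinset' G) (fun t => ∑ X ∈ (bigComps H M).powerset, F X t) := by
        refine pex_mono hδ0 hδ1 fun t _ => ?_
        split_ifs with h
        · exact Finset.sum_nonneg fun X _ => hF X t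
        · simp only [Joined, not_forall] at h
          obtain ⟨X, hX, h1, h2, h3⟩ := h
          refine le_trans ?_ (Finset.single_le_sum (f := fun X => F X t) (fun X _ => hF X t)
            (Finset.mem_powerset.2 hX))
          simp only [F]
          rw [if_pos ⟨h1, h2, h3⟩]
    _ = ∑ X ∈ (bigComps H M).powerset, pex δ (edgeFinset' G) (F X) := pex_sum _ _ _ _
    _ ≤ ∑ X ∈ (bigComps H M).powerset, (1 - δ ^ (2 * K)) ^ m := by
        refine Finset.sum_le_sum fun X _ => ?_
        by_cases hX : r ≤ (vertsOf H X).card ∧ r ≤ (vertsOf H (bigComps H M \ X)).card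
        · refine le_trans (le_of_eq ?_)
            (pex_not_joined_le hG hb hd0 hδ0 hδ1 hX.1 hX.2 hK m hm)
          refine pex_congr δ fun t _ => ?_
          simp only [F, hX, true_and]
        · refine le_trans (le_of_eq ?_) hnn
          rw [show F X = fun _ => 0 from funext fun t => if_neg fun h => hX ⟨h.1, h.2.1⟩,
            pex_const]
    _ = _ := by
        rw [Finset.sum_const, Finset.card_powerset, nsmul_eq_mul]
        norm_num

lemma two_mul_card_compEdges {G H : SimpleGraph V} {s : Finset (Sym2 V)}
    (hs : s ⊆ edgeFinset' G) (hH : H = SimpleGraph.fromEdgeSet (↑s : Set (Sym2 V)))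
    (c : H.ConnectedComponent) :
    2 * ((compEdges H c).card : ℝ) = ∑ v ∈ compVerts H c, degIn G s v := by
  have hHs : ∀ {x y}, H.Adj x y ↔ G.Adj x y ∧ s(x, y) ∈ s := by
    intro x y
    rw [hH, SimpleGraph.fromEdgeSet_adj]
    exact ⟨fun h => ⟨fromEdgeSet_le hs (SimpleGraph.fromEdgeSet_adj _ |>.2 h), h.1⟩,
      fun h => ⟨h.2, h.1.ne⟩⟩
  have hcard := Finset.sum_card_bipartiteAbove_eq_sum_card_bipartiteBelow
    (s := compVerts H c) (t := compEdges H c) (fun v e => v ∈ e)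
  have h1 : ∀ e ∈ compEdges H c,
      ((compVerts H c).bipartiteBelow (fun v e => v ∈ e) e).card = 2 := by
    intro e he
    obtain ⟨heH, hec⟩ := Finset.mem_filter.1 he
    rw [mem_edgeFinset'] at heH
    induction e with
    | _ x y =>
      have : (compVerts H c).bipartiteBelow (fun v e => v ∈ e) s(x, y) = {x, y} := by
        ext v
        simp only [Finset.mem_bipartiteBelow, Sym2.mem_iff, Finset.mem_insert,
          Finset.mem_singleton, and_iff_right_iff_imp]
        intro hv
        exact mem_compVerts.2 (hec v (Sym2.mem_iff.2 hv))
      rw [this, Finset.card_pair (H.ne_of_adj heH)]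
  have h2 : ∀ v ∈ compVerts H c,
      (((compEdges H c).bipartiteAbove (fun v e => v ∈ e) v).card : ℝ) = degIn G s v := by
    intro v hv
    rw [mem_compVerts] at hv
    have : (compEdges H c).bipartiteAbove (fun v e => v ∈ e) v =
        ((nbrs G v).filter fun z => s(v, z) ∈ s).image fun z => s(v, z) := by
      ext e
      simp only [Finset.mem_bipartiteAbove, Finset.mem_image, Finset.mem_filter, compEdges,
        mem_edgeFinset', mem_nbrs]
      constructor
      · rintro ⟨⟨he, -⟩, z, rfl⟩
        exact ⟨z, hHs.1 he, rfl⟩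
      · rintro ⟨z, hz, rfl⟩
        have hz' := hHs.2 hz
        refine ⟨⟨hz', fun u hu => ?_⟩, Sym2.mem_mk_left _ _⟩
        rcases Sym2.mem_iff.1 hu with rfl | rfl
        · exact hv
        · rw [← hv]
          exact SimpleGraph.ConnectedComponent.sound hz'.symm.reachable
    rw [this, Finset.card_image_of_injective _ fun z z' h => Sym2.congr_right.1 h, degIn,
      Finset.sum_boole]
  rw [Finset.sum_congr rfl h1, Finset.sum_const, smul_eq_mul] at hcard
  rw [← Finset.sum_congr rfl h2, ← Nat.cast_sum, hcard]
  push_cast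
  ring

end Merging

section Extinction

lemma geom_sum_lt {x y : ℝ} (hx : 0 ≤ x) (hxy : x < y) {n : ℕ} (hn : 2 ≤ n) :
    ∑ i ∈ Finset.range n, x ^ i < ∑ i ∈ Finset.range n, y ^ i :=
  Finset.sum_lt_sum (fun i _ => pow_le_pow_left₀ hx hxy.le i)
    ⟨1, Finset.mem_range.2 (by omega), by simpa using hxy⟩

lemma mul_geom_sum_eq_one {p a : ℝ} {n : ℕ} (ha : a = 1 - p + p * a ^ n) (ha1 : a ≠ 1) :
    p * ∑ i ∈ Finset.range n, a ^ i = 1 := by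
  have h := mul_neg_geom_sum a n
  have h1 : (1 - a) ≠ 0 := sub_ne_zero.2 ha1.symm
  refine mul_left_cancel₀ h1 ?_
  linear_combination p * h + ha

lemma branchSeq_nonneg {p : ℝ} (hp0 : 0 ≤ p) (hp1 : p ≤ 1) (d k : ℕ) : 0 ≤ branchSeq p d k := by
  induction k with
  | zero => exact sub_nonneg.2 hp1
  | succ k ih =>
    have := mul_nonneg hp0 (pow_nonneg ih (d - 1))
    simp only [branchSeq]
    linarith

lemma branchSeq_le {p a : ℝ} (hp0 : 0 ≤ p) (hp1 : p ≤ 1) {d : ℕ} (ha : 0 ≤ a)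
    (h : 1 - p + p * a ^ (d - 1) ≤ a) (k : ℕ) : branchSeq p d k ≤ a := by
  induction k with
  | zero =>
    have := mul_nonneg hp0 (pow_nonneg ha (d - 1))
    simp only [branchSeq]
    linarith
  | succ k ih =>
    refine le_trans ?_ h
    simp only [branchSeq]
    gcongr
    exact branchSeq_nonneg hp0 hp1 d k

lemma monotone_branchSeq {p : ℝ} (hp0 : 0 ≤ p) (hp1 : p ≤ 1) (d : ℕ) :
    Monotone (branchSeq p d) := by
  refine monotone_nat_of_le_succ fun k => ?_
  induction k with
  | zero =>
    have := mul_nonneg hp0 (pow_nonneg (branchSeq_nonneg hp0 hp1 d 0) (d - 1))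
    simp only [branchSeq] at this ⊢
    linarith
  | succ k ih =>
    rw [branchSeq, branchSeq]
    gcongr
    exact branchSeq_nonneg hp0 hp1 d k

lemma tendsto_branchSeq {p a : ℝ} (hp0 : 0 < p) (hp1 : p < 1) {d : ℕ} (hd : 3 ≤ d)
    (ha0 : 0 ≤ a) (ha1 : a < 1) (ha : a = 1 - p + p * a ^ (d - 1)) :
    Filter.Tendsto (branchSeq p d) Filter.atTop (nhds a) := by
  have hmono := monotone_branchSeq hp0.le hp1.le d
  have hle := branchSeq_le hp0.le hp1.le ha0 ha.symm.le
  obtain ⟨l, hl⟩ : ∃ l, Filter.Tendsto (branchSeq p d) Filter.atTop (nhds l) :=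
    ⟨_, tendsto_atTop_ciSup hmono ⟨a, by rintro _ ⟨k, rfl⟩; exact hle k⟩⟩
  have hla : l ≤ a := le_of_tendsto' hl hle
  have hl0 : 0 ≤ l := ge_of_tendsto' hl (branchSeq_nonneg hp0.le hp1.le d)
  have hfix : l = 1 - p + p * l ^ (d - 1) :=
    tendsto_nhds_unique (hl.comp (Filter.tendsto_add_atTop_nat 1))
      (((hl.pow (d - 1)).const_mul p).const_add (1 - p))
  rcases hla.lt_or_eq with hlt | rfl
  · have h1 := mul_geom_sum_eq_one ha ha1.ne
    have h2 := mul_geom_sum_eq_one hfix (hlt.trans ha1).ne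
    have h3 := mul_lt_mul_of_pos_left (geom_sum_lt hl0 hlt (show 2 ≤ d - 1 by omega)) hp0
    linarith
  · exact hl

/-- Lowering the retention probability slightly changes the extinction probability little. -/
lemma exists_lt_branchSeq_le {p a u : ℝ} (hp0 : 0 < p) (hp1 : p < 1) {d : ℕ} (hd : 3 ≤ d)
    (ha0 : 0 ≤ a) (ha : a = 1 - p + p * a ^ (d - 1)) (hau : a < u) (hu1 : u < 1) :
    ∃ p', 0 < p' ∧ p' < p ∧ ∀ k, branchSeq p' d k ≤ u := by
  have h1 := mul_geom_sum_eq_one ha (hau.trans hu1).ne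
  have h2 := geom_sum_lt ha0 hau (show 2 ≤ d - 1 by omega)
  have h3 := mul_neg_geom_sum u (d - 1)
  set S := ∑ i ∈ Finset.range (d - 1), u ^ i
  have h4 := mul_lt_mul_of_pos_left h2 hp0
  have hS : 0 < S := by
    by_contra! hS
    have := mul_nonpos_of_nonneg_of_nonpos hp0.le hS
    linarith
  have hp' : S⁻¹ < p := by
    rw [inv_lt_iff_one_lt_mul₀ hS]
    linarith
  refine ⟨S⁻¹, inv_pos.2 hS, hp', branchSeq_le (inv_pos.2 hS).le (hp'.trans hp1).le
    (ha0.trans hau.le) (le_of_eq ?_)⟩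
  have h5 : S⁻¹ * S = 1 := inv_mul_cancel₀ hS.ne'
  linear_combination S⁻¹ * h3 - (1 - u) * h5

end Extinction

section Giant

lemma ite_one_zero_nonneg (P : Prop) [Decidable P] : (0 : ℝ) ≤ if P then 1 else 0 := by
  split_ifs <;> norm_num

lemma ite_one_zero_le_one (P : Prop) [Decidable P] : (if P then (1 : ℝ) else 0) ≤ 1 := by
  split_ifs <;> norm_num

variable {V : Type} [Fintype V]

variable [DecidableEq V]

lemma degIn_nonneg (G : SimpleGraph V) (s : Finset (Sym2 V)) (v : V) : 0 ≤ degIn G s v :=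
  Finset.sum_nonneg fun _ _ => ite_one_zero_nonneg _

lemma degIn_le {G : SimpleGraph V} {d : ℕ} (hd : ∀ v, (nbrs G v).card ≤ d)
    (s : Finset (Sym2 V)) (v : V) : degIn G s v ≤ d := by
  rw [degIn, Finset.sum_boole]
  exact_mod_cast (Finset.card_filter_le _ _).trans (hd v)

/-- The number of vertices from which a long path starts. -/
noncomputable def longCount (G : SimpleGraph V) (k : ℕ) (s : Finset (Sym2 V)) : ℝ :=
  ∑ v, if HasLong G s k v then 1 else 0

/-- The sum of the degrees of the vertices from which a long path starts. -/
noncomputable def longDegree (G : SimpleGraph V) (k : ℕ) (s : Finset (Sym2 V)) : ℝ :=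
  ∑ v, degIn G s v * if HasLong G s k v then 1 else 0

lemma largest_comp_bounds {G : SimpleGraph V} {g d : ℕ} (hg : GirthGe G g)
    (hd : ∀ v, (nbrs G v).card ≤ d) {k : ℕ} (hk : k + 2 < g) {s' t : Finset (Sym2 V)}
    (hs' : s' ⊆ edgeFinset' G) (ht : t ⊆ edgeFinset' G) {l r : ℝ} (hr : 0 < r) (hrl : r ≤ l)
    (hl : l ≤ longCount G k s')
    (hJ : Joined (SimpleGraph.fromEdgeSet (↑s' : Set (Sym2 V))) (k + 2) r t)
    (hbig : (d + 1) ^ k < l - 2 * r) {H : SimpleGraph V}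
    (hH : H = SimpleGraph.fromEdgeSet (↑(s' ∪ t) : Set (Sym2 V))) {c : H.ConnectedComponent}
    (hc : IsLargestComp H c) :
    l - 2 * r ≤ (compVerts H c).card ∧ ((compVerts H c).card : ℝ) ≤ longCount G k (s' ∪ t) ∧
      longDegree G k (s' ∪ t) - d * (longCount G k (s' ∪ t) - (compVerts H c).card) ≤
        2 * ((compEdges H c).card : ℝ) ∧
      2 * ((compEdges H c).card : ℝ) ≤ longDegree G k (s' ∪ t) := by
  have hs : s' ∪ t ⊆ edgeFinset' G := Finset.union_subset hs' ht
  set H' := SimpleGraph.fromEdgeSet (↑s' : Set (Sym2 V)) with hH'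
  have hle' : H' ≤ H := by
    rw [hH]
    exact SimpleGraph.fromEdgeSet_mono (by simp)
  have hlet : SimpleGraph.fromEdgeSet (↑t : Set (Sym2 V)) ≤ H := by
    rw [hH]
    exact SimpleGraph.fromEdgeSet_mono (by simp)
  have hU : longCount G k s' ≤ (vertsOf H' (bigComps H' (k + 2))).card := by
    rw [longCount, Finset.sum_boole]
    norm_cast
    refine Finset.card_le_card fun v hv => ?_
    exact mem_vertsOf.2 (mem_bigComps.2 ((Finset.mem_filter.1 hv).2.le_card hg hs' hk))
  obtain ⟨c', hc'⟩ := exists_comp_of_joined hle' hlet hr ((hrl.trans hl).trans hU) hJ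
  have hcc : ((compVerts H c').card : ℝ) ≤ (compVerts H c).card := by exact_mod_cast hc c'
  have hlow : l - 2 * r ≤ (compVerts H c).card := by linarith
  have hlong : ∀ v ∈ compVerts H c, HasLong G (s' ∪ t) k v := by
    intro v hv
    have hcv := mem_compVerts.1 hv
    subst hH
    refine hasLong_of_card_lt hd hs ?_
    rw [hcv]
    exact_mod_cast hbig.trans_le hlow
  have hE := two_mul_card_compEdges hs hH c
  have hX : ((compVerts H c).card : ℝ) =
      ∑ v ∈ compVerts H c, if HasLong G (s' ∪ t) k v then 1 else 0 := by
    rw [Finset.sum_congr rfl fun v hv => if_pos (hlong v hv)]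
    simp
  have hY : 2 * ((compEdges H c).card : ℝ) =
      ∑ v ∈ compVerts H c, degIn G (s' ∪ t) v * if HasLong G (s' ∪ t) k v then 1 else 0 := by
    rw [hE]
    exact Finset.sum_congr rfl fun v hv => by rw [if_pos (hlong v hv), mul_one]
  have hXs := Finset.sum_add_sum_compl (compVerts H c)
    fun v => if HasLong G (s' ∪ t) k v then (1 : ℝ) else 0
  have hYs := Finset.sum_add_sum_compl (compVerts H c)
    fun v => degIn G (s' ∪ t) v * if HasLong G (s' ∪ t) k v then (1 : ℝ) else 0
  rw [← hX] at hXs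
  rw [← hY] at hYs
  have hX0 : 0 ≤ ∑ v ∈ (compVerts H c)ᶜ, if HasLong G (s' ∪ t) k v then (1 : ℝ) else 0 :=
    Finset.sum_nonneg fun v _ => ite_one_zero_nonneg _
  have hY0 : 0 ≤ ∑ v ∈ (compVerts H c)ᶜ,
      degIn G (s' ∪ t) v * if HasLong G (s' ∪ t) k v then (1 : ℝ) else 0 :=
    Finset.sum_nonneg fun v _ => mul_nonneg (degIn_nonneg _ _ _) (ite_one_zero_nonneg _)
  have hXY : ∑ v ∈ (compVerts H c)ᶜ,
      (degIn G (s' ∪ t) v * if HasLong G (s' ∪ t) k v then (1 : ℝ) else 0) ≤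
      d * ∑ v ∈ (compVerts H c)ᶜ, if HasLong G (s' ∪ t) k v then (1 : ℝ) else 0 := by
    rw [Finset.mul_sum]
    exact Finset.sum_le_sum fun v _ =>
      mul_le_mul_of_nonneg_right (degIn_le hd _ _) (ite_one_zero_nonneg _)
  change _ = longCount G k (s' ∪ t) at hXs
  change _ = longDegree G k (s' ∪ t) at hYs
  refine ⟨hlow, by linarith, ?_, by linarith⟩
  rw [← hXs, ← hYs]
  linarith

lemma pex_longCount {G : SimpleGraph V} {g d : ℕ} (hg : GirthGe G g)
    (hd : ∀ v, (nbrs G v).card = d) (p : ℝ) {k : ℕ} (hk : 2 * k + 2 < g) :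
    pex p (edgeFinset' G) (longCount G k) = (1 - branchSeq p d k ^ d) * Fintype.card V := by
  unfold longCount
  rw [pex_sum, Finset.sum_congr rfl fun v _ => pex_hasLong hg hd p hk v, Finset.sum_const,
    Finset.card_univ, nsmul_eq_mul, mul_comm]

lemma pex_longDegree {G : SimpleGraph V} {g d : ℕ} (hg : GirthGe G g)
    (hd : ∀ v, (nbrs G v).card = d) (p : ℝ) {k : ℕ} (hk : 2 * k + 2 < g) :
    pex p (edgeFinset' G) (longDegree G k) =
      d * (p - (branchSeq p d k - (1 - p)) * branchSeq p d k ^ (d - 1)) * Fintype.card V := by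
  unfold longDegree
  rw [pex_sum, Finset.sum_congr rfl fun v _ => pex_degIn_hasLong hg hd p hk v, Finset.sum_const,
    Finset.card_univ, nsmul_eq_mul, mul_comm]

lemma abs_longCount_insert_sub_le {G : SimpleGraph V} {g d : ℕ} (hg : GirthGe G g)
    (hd : ∀ v, (nbrs G v).card ≤ d) {k : ℕ} (hk : k + 2 < g) (e : Sym2 V)
    (s : Finset (Sym2 V)) :
    |longCount G k (insert e s) - longCount G k s| ≤ 1 * (2 * (d + 1) ^ (k + 1)) :=
  abs_sum_insert_sub_le hg hd hk zero_le_one (fun v s => if HasLong G s k v then 1 else 0)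
    (fun v => (depOn_hasLong G k v).ite 1 0) (fun _ _ => ite_one_zero_nonneg _)
    (fun _ _ => ite_one_zero_le_one _) e s

lemma abs_longDegree_insert_sub_le {G : SimpleGraph V} {g d : ℕ} (hg : GirthGe G g)
    (hd : ∀ v, (nbrs G v).card ≤ d) {k : ℕ} (hk : k + 2 < g) (e : Sym2 V)
    (s : Finset (Sym2 V)) :
    |longDegree G k (insert e s) - longDegree G k s| ≤ d * (2 * (d + 1) ^ (k + 1)) := by
  refine abs_sum_insert_sub_le hg hd hk (Nat.cast_nonneg d)
    (fun v s => degIn G s v * if HasLong G s k v then 1 else 0) (fun v s s' h => ?_)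
    (fun v s => ?_) (fun v s => ?_) e s
  · exact congrArg₂ (· * ·) (depOn_degIn G k v s s' h)
      ((depOn_hasLong G k v).ite (1 : ℝ) 0 s s' h)
  · exact mul_nonneg (degIn_nonneg G s v) (ite_one_zero_nonneg _)
  · change (degIn G s v * if HasLong G s k v then (1 : ℝ) else 0) ≤ d
    exact (mul_le_of_le_one_right (degIn_nonneg G s v) (ite_one_zero_le_one _)).trans
      (degIn_le hd s v)

lemma pex_not_joined_comps_le_exp {G : SimpleGraph V} {b : ℝ} {d : ℕ} (hG : IsExpander G b d)
    (hb : 0 < b) (hd0 : 0 < d) {δ : ℝ} (hδ0 : 0 ≤ δ) (hδ1 : δ ≤ 1) {r : ℝ} (hr : 0 < r)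
    {K : ℕ} (hK : d < K * (b * r)) (hV : 0 < Fintype.card V) (H : SimpleGraph V) {M : ℕ}
    (hM : 1 ≤ M * (δ ^ (2 * K) * (b * r / (4 * K)) / 2)) :
    pex δ (edgeFinset' G) (fun t => if ¬ Joined H M (r * Fintype.card V) t then 1 else 0) ≤
      Real.exp 1 * Real.exp (-(δ ^ (2 * K) * (b * r / (4 * K)) / 2) * Fintype.card V) := by
  have hn : (0 : ℝ) < Fintype.card V := by exact_mod_cast hV
  set n : ℝ := (Fintype.card V : ℝ) with hndef
  have hK0 : (0 : ℝ) < K := by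
    by_contra! h
    have := mul_nonpos_of_nonpos_of_nonneg h (mul_pos hb hr).le
    have : (0 : ℝ) ≤ d := Nat.cast_nonneg d
    linarith
  set a := δ ^ (2 * K) with ha
  have ha0 : 0 ≤ a := pow_nonneg hδ0 _
  have ha1 : a ≤ 1 := pow_le_one₀ hδ0 hδ1
  set z := b * r / (4 * K) with hz
  have hz0 : 0 < z := by positivity
  have hzK : z * (4 * K) = b * r := by
    rw [hz]
    field_simp
  set m := ⌊z * n⌋₊ with hm
  have hm1 : (m : ℝ) ≤ z * n := Nat.floor_le (by positivity)
  have hm2 : z * n < m + 1 := Nat.lt_floor_add_one _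
  have h1 := pex_not_joined_comps_le hG hb hd0 hδ0 hδ1 (r := r * n) (K := K)
    (by rw [← hndef]; nlinarith) m (by nlinarith) H M
  refine h1.trans ?_
  have hbig : ((bigComps H M).card : ℝ) * M ≤ n := by
    rw [hndef]
    exact_mod_cast card_bigComps_mul_le H M
  have h2 : ((bigComps H M).card : ℝ) ≤ a * z / 2 * n := by
    calc ((bigComps H M).card : ℝ) ≤ (bigComps H M).card * (M * (a * z / 2)) :=
          le_mul_of_one_le_right (Nat.cast_nonneg _) hM
      _ = (bigComps H M).card * M * (a * z / 2) := by ring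
      _ ≤ n * (a * z / 2) := by gcongr
      _ = _ := by ring
  have h3 : (2 : ℝ) ^ (bigComps H M).card ≤ Real.exp (a * z / 2 * n) := by
    refine le_trans ?_ (Real.exp_le_exp.2 h2)
    rw [← mul_one ((bigComps H M).card : ℝ), Real.exp_nat_mul]
    exact pow_le_pow_left₀ zero_le_two (by linarith [Real.add_one_le_exp (1 : ℝ)]) _
  have h4 : (1 - a) ^ m ≤ Real.exp (1 - a * z * n) := by
    calc (1 - a) ^ m ≤ Real.exp (-a) ^ m := by
          gcongr
          linarith [Real.add_one_le_exp (-a)]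
      _ = Real.exp (m * -a) := (Real.exp_nat_mul _ _).symm
      _ ≤ _ := Real.exp_le_exp.2 (by nlinarith)
  calc _ ≤ Real.exp (a * z / 2 * n) * Real.exp (1 - a * z * n) := by
        gcongr
    _ = _ := by
        rw [← Real.exp_add, ← Real.exp_add]
        congr 1
        ring

end Giant

section Assembly

lemma one_sub_le_ite_of_imp (P B₁ B₂ B₃ B₄ B₅ : Prop)
    (h : ¬ B₁ → ¬ B₂ → ¬ B₃ → ¬ B₄ → ¬ B₅ → P) :
    1 - ((((if B₁ then (1 : ℝ) else 0) + if B₂ then 1 else 0) + if B₃ then 1 else 0) +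
      ((if B₄ then 1 else 0) + if B₅ then 1 else 0)) ≤ if P then 1 else 0 := by
  have h₁ := ite_one_zero_nonneg B₁
  have h₂ := ite_one_zero_nonneg B₂
  have h₃ := ite_one_zero_nonneg B₃
  have h₄ := ite_one_zero_nonneg B₄
  have h₅ := ite_one_zero_nonneg B₅
  have hP := ite_one_zero_nonneg P
  by_cases hB : B₁ ∨ B₂ ∨ B₃ ∨ B₄ ∨ B₅
  · refine le_trans ?_ hP
    rcases hB with hB | hB | hB | hB | hB <;> rw [if_pos hB] at * <;> linarith
  · push Not at hB
    rw [if_pos (h hB.1 hB.2.1 hB.2.2.1 hB.2.2.2.1 hB.2.2.2.2)]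
    linarith

variable {V : Type} [Fintype V]

lemma percProb_eq_pex (G : SimpleGraph V) (p : ℝ) (P : SimpleGraph V → Prop) :
    percProb G p P = pex p (edgeFinset' G)
      (fun s => if P (SimpleGraph.fromEdgeSet (↑s : Set (Sym2 V))) then 1 else 0) :=
  rfl

variable [DecidableEq V]

/-- Sprinkling: bounding the probability of a failure caused by one of five bad events, the first
three of which concern the union of both rounds of percolation. -/
lemma le_percProb_of_sprinkle {G : SimpleGraph V} {p p' δ : ℝ} (hp0 : 0 ≤ p') (hp1 : p' ≤ 1)
    (hδ0 : 0 ≤ δ) (hδ1 : δ ≤ 1) (hp : 1 - (1 - p') * (1 - δ) = p) {P : SimpleGraph V → Prop}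
    (B₁ B₂ B₃ B₄ : Finset (Sym2 V) → Prop) (B₅ : Finset (Sym2 V) → Finset (Sym2 V) → Prop)
    {x₁ x₂ x₃ x₄ x₅ : ℝ}
    (h₁ : pex p (edgeFinset' G) (fun s => if B₁ s then 1 else 0) ≤ x₁)
    (h₂ : pex p (edgeFinset' G) (fun s => if B₂ s then 1 else 0) ≤ x₂)
    (h₃ : pex p (edgeFinset' G) (fun s => if B₃ s then 1 else 0) ≤ x₃)
    (h₄ : pex p' (edgeFinset' G) (fun s => if B₄ s then 1 else 0) ≤ x₄)
    (h₅ : ∀ s, pex δ (edgeFinset' G) (fun t => if B₅ s t then 1 else 0) ≤ x₅)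
    (h : ∀ s ⊆ edgeFinset' G, ∀ t ⊆ edgeFinset' G, ¬ B₁ (s ∪ t) → ¬ B₂ (s ∪ t) →
      ¬ B₃ (s ∪ t) → ¬ B₄ s → ¬ B₅ s t →
      P (SimpleGraph.fromEdgeSet (↑(s ∪ t) : Set (Sym2 V)))) :
    1 - (x₁ + x₂ + x₃ + x₄ + x₅) ≤ percProb G p P := by
  rw [percProb_eq_pex, ← hp, ← pex_sprinkle]
  let F : Finset (Sym2 V) → ℝ := fun s => ((if B₁ s then (1 : ℝ) else 0) +
    if B₂ s then 1 else 0) + if B₃ s then 1 else 0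
  have hF : pex p (edgeFinset' G) F ≤ x₁ + x₂ + x₃ := by
    simp only [F, pex_add]
    linarith
  rw [← hp, ← pex_sprinkle] at hF
  calc 1 - (x₁ + x₂ + x₃ + x₄ + x₅) ≤
        pex p' (edgeFinset' G) (fun s => 1 - (pex δ (edgeFinset' G) (fun t => F (s ∪ t)) +
          ((if B₄ s then 1 else 0) + x₅))) := by
        simp only [pex_sub, pex_add, pex_const]
        linarith
    _ ≤ pex p' (edgeFinset' G) (fun s => pex δ (edgeFinset' G) (fun t => 1 - (F (s ∪ t) +
          ((if B₄ s then 1 else 0) + if B₅ s t then 1 else 0)))) := by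
        refine pex_mono hp0 hp1 fun s _ => ?_
        simp only [pex_sub, pex_add, pex_const]
        linarith [h₅ s]
    _ ≤ _ := by
        refine pex_mono hp0 hp1 fun s hs => pex_mono hδ0 hδ1 fun t ht => ?_
        exact one_sub_le_ite_of_imp _ _ _ _ _ _ (h s hs t ht)

lemma le_percProb_largest_comp {G : SimpleGraph V} {b : ℝ} {d g : ℕ}
    (hG : IsRegularExpander G b d) (hb : 0 < b) (hd0 : 0 < d) (hg : GirthGe G g) {k : ℕ}
    (hk : 2 * k + 2 < g) (hV : 0 < Fintype.card V) {p p' δ : ℝ} (hp0 : 0 ≤ p') (hp1 : p' ≤ 1)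
    (hδ0 : 0 ≤ δ) (hδ1 : δ ≤ 1) (hp : 1 - (1 - p') * (1 - δ) = p) {r : ℝ} (hr : 0 < r)
    {K : ℕ} (hK : d < K * (b * r))
    (hkK : 1 ≤ ((k + 2 : ℕ) : ℝ) * (δ ^ (2 * K) * (b * r / (4 * K)) / 2)) {x x' y c : ℝ}
    (hx : 1 - branchSeq p d k ^ d ≤ x) (hx' : x' ≤ 1 - branchSeq p' d k ^ d)
    (hy : |d * (p - (branchSeq p d k - (1 - p)) * branchSeq p d k ^ (d - 1)) - y| ≤ r)
    (hrx : 2 * r ≤ x') (hbig : (d + 1) ^ k < (x' - 3 * r) * Fintype.card V)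
    (hc₁ : c ≤ bdRate (1 * (2 * (d + 1) ^ (k + 1))) d r)
    (hc₂ : c ≤ bdRate (d * (2 * (d + 1) ^ (k + 1))) d r)
    (hc₃ : c ≤ δ ^ (2 * K) * (b * r / (4 * K)) / 2) :
    1 - (4 + Real.exp 1) * Real.exp (-c * Fintype.card V) ≤ percProb G p (fun H =>
      ∀ c₁ : H.ConnectedComponent, IsLargestComp H c₁ →
        (x' - 3 * r) * Fintype.card V ≤ (compVerts H c₁).card ∧
        (compVerts H c₁).card ≤ (x + r) * Fintype.card V ∧
        (y - 2 * r - d * (x - x' + 4 * r)) * Fintype.card V ≤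
          2 * ((compEdges H c₁).card : ℝ) ∧
        2 * ((compEdges H c₁).card : ℝ) ≤ (y + 2 * r) * Fintype.card V) := by
  have hd : ∀ v, (nbrs G v).card = d := fun v => (card_nbrs G v).trans (hG.2 v)
  have hd' : ∀ v, (nbrs G v).card ≤ d := fun v => (hd v).le
  have hn : (0 : ℝ) < Fintype.card V := by exact_mod_cast hV
  have hdr : (0 : ℝ) < d := by exact_mod_cast hd0
  have hE : ((edgeFinset' G).card : ℝ) ≤ d * Fintype.card V := by
    exact_mod_cast card_edgeFinset'_le hd'
  have hp0' : 0 ≤ p := by nlinarith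
  have hp1' : p ≤ 1 := by nlinarith
  have hk' : k + 2 < g := by omega
  have hexp : ∀ {ρ : ℝ}, c ≤ ρ →
      Real.exp (-ρ * Fintype.card V) ≤ Real.exp (-c * Fintype.card V) := by
    intro ρ hρ
    gcongr
  have hc1 : (0 : ℝ) < 1 * (2 * (d + 1) ^ (k + 1)) := by positivity
  have hc2 : (0 : ℝ) < d * (2 * (d + 1) ^ (k + 1)) := by positivity
  have h₁ := (pex_upper_tail hp0' hp1' hc1 hdr hr _ hE (longCount G k)
    (abs_longCount_insert_sub_le hg hd' hk')).trans (hexp hc₁)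
  have h₂ := (pex_upper_tail hp0' hp1' hc2 hdr hr _ hE (longDegree G k)
    (abs_longDegree_insert_sub_le hg hd' hk')).trans (hexp hc₂)
  have h₃ := (pex_lower_tail hp0' hp1' hc2 hdr hr _ hE (longDegree G k)
    (abs_longDegree_insert_sub_le hg hd' hk')).trans (hexp hc₂)
  have h₄ := (pex_lower_tail hp0 hp1 hc1 hdr hr _ hE (longCount G k)
    (abs_longCount_insert_sub_le hg hd' hk')).trans (hexp hc₁)
  rw [pex_longCount hg hd _ hk] at h₁ h₄
  rw [pex_longDegree hg hd _ hk] at h₂ h₃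
  have h₅ := fun s : Finset (Sym2 V) =>
    (pex_not_joined_comps_le_exp hG.1 hb hd0 hδ0 hδ1 hr hK hV
      (SimpleGraph.fromEdgeSet (↑s : Set (Sym2 V))) hkK).trans
      (mul_le_mul_of_nonneg_left (hexp hc₃) (Real.exp_pos 1).le)
  refine le_trans (le_of_eq ?_) (le_percProb_of_sprinkle hp0 hp1 hδ0 hδ1 hp _ _ _ _
    (fun s t => ¬ Joined (SimpleGraph.fromEdgeSet (↑s : Set (Sym2 V))) (k + 2)
      (r * Fintype.card V) t) h₁ h₂ h₃ h₄
    (fun s => (le_of_eq (pex_congr δ fun _ _ => by congr)).trans (h₅ s)) ?_)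
  · ring
  intro s hs t ht g₁ g₂ g₃ g₄ g₅ c₁ hc₁
  set n : ℝ := (Fintype.card V : ℝ)
  rw [not_not] at g₅
  rw [not_le] at g₁ g₂ g₃ g₄
  set X := 1 - branchSeq p d k ^ d
  set X' := 1 - branchSeq p' d k ^ d
  set Y := d * (p - (branchSeq p d k - (1 - p)) * branchSeq p d k ^ (d - 1))
  have hXn : X * n ≤ x * n := by gcongr
  have hXn' : x' * n ≤ X' * n := by gcongr
  have hYn := abs_le.1 hy
  have hYn1 : (Y - y) * n ≤ r * n := by gcongr; exact hYn.2
  have hYn2 : -r * n ≤ (Y - y) * n := by gcongr; exact hYn.1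
  have hrn : 2 * r * n ≤ x' * n := by gcongr
  obtain ⟨e₁, e₂, e₃, e₄⟩ := largest_comp_bounds hg hd' hk' hs ht (l := (x' - r) * n)
    (mul_pos hr hn) (by linarith) (by linarith) g₅ (by linarith) rfl hc₁
  refine ⟨by linarith, by linarith, ?_, by linarith⟩
  refine le_trans ?_ e₃
  have : (d : ℝ) * (longCount G k (s ∪ t) - (compVerts _ c₁).card) ≤
      d * ((x + r) * n - (x' - 3 * r) * n) := by
    gcongr
    · linarith
    · linarith
  linarith

end Assembly

lemma girth_le_card {V : Type} [Fintype V] (G : SimpleGraph V) : G.girth ≤ Fintype.card V := by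
  by_cases h : G.IsAcyclic
  · simp [SimpleGraph.girth_eq_zero.2 h]
  · obtain ⟨a, w, hw, hl⟩ := SimpleGraph.exists_girth_eq_length.2 h
    rw [hl]
    simpa using hw.support_nodup.length_le_card

theorem giant_component_size (d : ℕ) (hd : 3 ≤ d) (p q : ℝ)
    (hp : 1 / ((d : ℝ) - 1) < p) (hp1 : p < 1)
    (hq0 : 0 ≤ q) (hq1 : q < 1)
    (hq : q = (1 - p + p * q) ^ (d - 1))
    (ε b : ℝ) (hε : 0 < ε) (hb : 0 < b) :
    ∃ c > (0:ℝ), ∃ C > (0:ℝ), ∃ R : ℕ, 0 < R ∧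
      ∀ (V : Type) [Fintype V] [DecidableEq V] (G : SimpleGraph V),
        IsRegularExpander G b d → (R : ℕ∞) ≤ G.girth →
        1 - C * Real.exp (-c * Fintype.card V) ≤
          percProb G p (fun H =>
            ∀ c₁ : H.ConnectedComponent, IsLargestComp H c₁ →
              |((compVerts H c₁).card : ℝ) / Fintype.card V
                  - (1 - q * (1 - p) - p * q ^ 2)| < ε ∧
              |((compEdges H c₁).card : ℝ) / Fintype.card V
                  - (1 / 2 * p * d * (1 - q ^ 2))| < ε) := by
  have hd3 : (3 : ℝ) ≤ d := by exact_mod_cast hd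
  have hd0 : (0 : ℝ) < d := by linarith
  have hp0 : 0 < p := lt_trans (by rw [one_div]; exact inv_pos.2 (by linarith)) hp
  obtain ⟨α, hα⟩ : ∃ α, α = 1 - p + p * q := ⟨_, rfl⟩
  rw [← hα] at hq
  have hα0 : 0 < α := by
    have := mul_nonneg hp0.le hq0
    linarith
  have hα1 : α < 1 := by
    have := mul_lt_mul_of_pos_left hq1 hp0
    linarith
  have hfix : α = 1 - p + p * α ^ (d - 1) := by rw [← hq]; exact hα
  have hαd : α ^ d = q * (1 - p) + p * q ^ 2 := by
    obtain ⟨m, rfl⟩ : ∃ m, d = m + 1 := ⟨d - 1, by omega⟩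
    rw [pow_succ]
    simp only [Nat.add_sub_cancel] at hq
    rw [← hq, hα]
    ring
  obtain ⟨θ, hθ⟩ : ∃ θ, θ = 1 - α ^ d := ⟨_, rfl⟩
  have hθ0 : 0 < θ := by
    have := pow_lt_one₀ hα0.le hα1 (show d ≠ 0 by omega)
    linarith
  obtain ⟨r, hr⟩ : ∃ r, r = min (θ / 10) (ε / (10 * d)) := ⟨_, rfl⟩
  have hr0 : 0 < r := by
    rw [hr]
    exact lt_min (by positivity) (by positivity)
  have hrθ : 10 * r ≤ θ := by
    have : r ≤ θ / 10 := hr ▸ min_le_left _ _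
    linarith
  have hrε : 10 * (d * r) ≤ ε := by
    have : r ≤ ε / (10 * d) := hr ▸ min_le_right _ _
    rw [le_div_iff₀ (by positivity)] at this
    linarith
  have hrd : 3 * r ≤ d * r := by gcongr
  obtain ⟨u, hαu, hu1, hud⟩ : ∃ u, α < u ∧ u < 1 ∧ u ^ d < α ^ d + r := by
    have h1 : ∀ᶠ u in nhds α, u ^ d < α ^ d + r :=
      (continuous_pow d).continuousAt.eventually_lt continuousAt_const (by linarith)
    have h2 : ∀ᶠ u in nhds α, u < 1 := eventually_lt_nhds hα1
    have h3 := (h1.and h2).filter_mono (nhdsWithin_le_nhds (s := Set.Ioi α))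
    obtain ⟨u, ⟨hu1, hu2⟩, hu3⟩ := (h3.and self_mem_nhdsWithin).exists
    exact ⟨u, hu3, hu2, hu1⟩
  obtain ⟨p', hp'0, hp'p, hp'u⟩ := exists_lt_branchSeq_le hp0 hp1 hd hα0.le hfix hαu hu1
  obtain ⟨δ, hδ⟩ : ∃ δ, δ = 1 - (1 - p) / (1 - p') := ⟨_, rfl⟩
  have hp'1 : 0 < 1 - p' := by linarith
  have hδ0 : 0 < δ := by
    have : (1 - p) / (1 - p') < 1 := (div_lt_one hp'1).2 (by linarith)
    linarith
  have hδ1 : δ ≤ 1 := by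
    have : 0 ≤ (1 - p) / (1 - p') := div_nonneg (by linarith) hp'1.le
    linarith
  have hδp : 1 - (1 - p') * (1 - δ) = p := by
    rw [hδ]
    field_simp
    ring
  obtain ⟨K, hK⟩ := exists_nat_gt ((d : ℝ) / (b * r))
  have hK0 : (0 : ℝ) < K := lt_trans (by positivity) hK
  rw [div_lt_iff₀ (by positivity)] at hK
  obtain ⟨z, hz⟩ : ∃ z, z = δ ^ (2 * K) * (b * r / (4 * K)) / 2 := ⟨_, rfl⟩
  have hz0 : 0 < z := by
    rw [hz]
    positivity
  obtain ⟨y, hy⟩ : ∃ y, y = p * d * (1 - q ^ 2) := ⟨_, rfl⟩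
  have hlim := tendsto_branchSeq hp0 hp1 hd hα0.le hα1 hfix
  obtain ⟨k, hkz, hkx, hky⟩ : ∃ k : ℕ, 1 ≤ ((k + 2 : ℕ) : ℝ) * z ∧
      1 - branchSeq p d k ^ d ≤ θ + r ∧
      |d * (p - (branchSeq p d k - (1 - p)) * branchSeq p d k ^ (d - 1)) - y| ≤ r := by
    have h1 : ∀ᶠ k : ℕ in Filter.atTop, 1 ≤ ((k + 2 : ℕ) : ℝ) * z := by
      obtain ⟨k₀, hk₀⟩ := exists_nat_gt (1 / z)
      rw [div_lt_iff₀ hz0] at hk₀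
      filter_upwards [Filter.eventually_ge_atTop k₀] with k hk
      have : (k₀ : ℝ) ≤ ((k + 2 : ℕ) : ℝ) := by exact_mod_cast hk.trans (Nat.le_add_right _ _)
      have := mul_le_mul_of_nonneg_right this hz0.le
      linarith
    have h2 : ∀ᶠ k : ℕ in Filter.atTop, 1 - branchSeq p d k ^ d < θ + r :=
      ((hlim.pow d).const_sub 1).eventually_lt_const (by linarith)
    have h3 : Filter.Tendsto (fun k => (d : ℝ) *
        (p - (branchSeq p d k - (1 - p)) * branchSeq p d k ^ (d - 1))) Filter.atTop (nhds y) := by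
      have : y = d * (p - (α - (1 - p)) * α ^ (d - 1)) := by
        rw [← hq, hα, hy]
        ring
      rw [this]
      exact (((hlim.sub_const _).mul (hlim.pow _)).const_sub _).const_mul _
    have h4 := (Metric.tendsto_nhds.1 h3) r hr0
    obtain ⟨k, ⟨hk1, hk2⟩, hk3⟩ := ((h1.and h2).and h4).exists
    exact ⟨k, hk1, hk2.le, (Real.dist_eq _ _ ▸ hk3).le⟩
  obtain ⟨N, hN⟩ := exists_nat_gt (((d : ℝ) + 1) ^ k / (θ / 2))
  rw [div_lt_iff₀ (by positivity)] at hN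
  obtain ⟨c, hc⟩ : ∃ c, c = min (bdRate (1 * (2 * ((d : ℝ) + 1) ^ (k + 1))) d r)
    (min (bdRate (d * (2 * ((d : ℝ) + 1) ^ (k + 1))) d r) z) := ⟨_, rfl⟩
  have hc0 : 0 < c := by
    rw [hc]
    exact lt_min (bdRate_pos (by positivity) hd0 hr0)
      (lt_min (bdRate_pos (by positivity) hd0 hr0) hz0)
  refine ⟨c, hc0, 4 + Real.exp 1, by positivity, 2 * k + 3 + N, by omega, ?_⟩
  intro V _ _ G hG hgirth
  have hg := girthGe_of_le_girth hgirth
  have hcard : 2 * k + 3 + N ≤ Fintype.card V :=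
    le_trans (by exact_mod_cast hgirth) (girth_le_card G)
  have hn : (0 : ℝ) < Fintype.card V := by
    exact_mod_cast (show 0 < Fintype.card V by omega)
  have hNn : (N : ℝ) ≤ Fintype.card V := by
    exact_mod_cast (show N ≤ Fintype.card V by omega)
  have hx' : θ - r ≤ 1 - branchSeq p' d k ^ d := by
    have := pow_le_pow_left₀ (branchSeq_nonneg hp'0.le (hp'p.trans hp1).le d k) (hp'u k) d
    linarith
  have hbig : ((d : ℝ) + 1) ^ k < (θ - r - 3 * r) * Fintype.card V := by
    calc _ < N * (θ / 2) := hN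
      _ ≤ Fintype.card V * (θ - r - 3 * r) := by
          gcongr
          linarith
      _ = _ := mul_comm _ _
  have hmain := le_percProb_largest_comp hG hb (show 0 < d by omega) hg (by omega) (by omega)
    hp'0.le (hp'p.trans hp1).le hδ0.le hδ1 hδp hr0 hK (hz ▸ hkz) hkx hx' hky (by linarith) hbig
    (hc ▸ min_le_left _ _) (hc ▸ (min_le_right _ _).trans (min_le_left _ _))
    (hz ▸ hc ▸ (min_le_right _ _).trans (min_le_right _ _))
  refine hmain.trans ?_
  rw [percProb_eq_pex, percProb_eq_pex]
  refine pex_mono hp0.le hp1.le fun s _ => ?_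
  split_ifs with h1 h2
  · exact le_rfl
  · refine absurd (fun c₁ hc₁ => ?_) h2
    obtain ⟨e₁, e₂, e₃, e₄⟩ := h1 c₁ hc₁
    have hθ' : 1 - q * (1 - p) - p * q ^ 2 = θ := by
      rw [hθ, hαd]
      ring
    have hy' : 1 / 2 * p * d * (1 - q ^ 2) = y / 2 := by
      rw [hy]
      ring
    rw [← le_div_iff₀ hn] at e₁ e₃
    rw [← div_le_iff₀ hn] at e₂ e₄
    rw [mul_div_assoc] at e₃ e₄
    rw [hθ', hy', abs_lt, abs_lt]
    refine ⟨⟨by linarith, by linarith⟩, by linarith, by linarith⟩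
  · exact zero_le_one
  · exact le_rfl

end Percolation

end
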